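/- Let A be a σ-unital simple C*-algebra with QT̃(A) ≠ {0} and with strict comparison, and let x ∈ A⊗K. If d_τ(x*x) < ∞ for all τ ∈ QT̃(A) and ω(x*x) = 0, then x ∈ Ped(A⊗K). If furthermore x ∈ A, then x ∈ Ped(A). -/

import Mathlib

open scoped ENNReal
open Filter Topology

noncomputable section

namespace Paper

/-! ### Generic definitions in a (non-unital) C*-algebra -/

variable (R : Type*) [NonUnitalCStarAlgebra R] [PartialOrder R] [StarOrderedRing R]

variable {R} in
/-- The hereditary C*-subalgebra generated by `b`, i.e. `closure (b R b)`. -/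
def her (b : R) : Set R := closure {x : R | ∃ y : R, x = b * y * b}

/-- `I` is a (not necessarily closed) two-sided ideal of the subalgebra `B`. -/
def IsIdealIn (B I : Set R) : Prop :=
  I ⊆ B ∧ (0 : R) ∈ I ∧ (∀ x ∈ I, ∀ y ∈ I, x + y ∈ I) ∧ (∀ x ∈ I, -x ∈ I) ∧
    (∀ x ∈ I, ∀ b ∈ B, x * b ∈ I ∧ b * x ∈ I)

variable {R} in
/-- The Pedersen ideal of the subalgebra `B`: the minimal dense two-sided ideal of `B`,
equivalently the intersection of all dense two-sided ideals of `B`. -/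
def pedersenIn (B : Set R) : Set R :=
  ⋂ I ∈ {I : Set R | IsIdealIn R B I ∧ B ⊆ closure I}, I

/-- The Pedersen ideal of `R`. -/
def pedersen : Set R := pedersenIn (Set.univ : Set R)

variable {R} in
/-- Cuntz subequivalence `a ≲ b`. -/
def CuntzLE (a b : R) : Prop :=
  ∃ x : ℕ → R, Tendsto (fun n => ‖a - star (x n) * b * x n‖) atTop (𝓝 0)

variable {R} in
/-- Cuntz subequivalence relative to a subset `B` (the `xₙ` are taken in `B`). -/
def CuntzLEIn (B : Set R) (a b : R) : Prop :=
  ∃ x : ℕ → R, (∀ n, x n ∈ B) ∧ Tendsto (fun n => ‖a - star (x n) * b * x n‖) atTop (𝓝 0)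

variable {R} in
/-- Cuntz equivalence `a ∼ b`. -/
def CuntzEq (a b : R) : Prop := CuntzLE a b ∧ CuntzLE b a

/-- The cut-off function `f_ε`: `0` on `[0, ε/2]`, `1` on `[ε, ∞)`, linear in between. -/
def cutoff (ε : ℝ) : ℝ → ℝ := fun t => min 1 (max 0 (2 * t / ε - 1))

variable {R} in
/-- `f_ε(a)`, via the (non-unital) continuous functional calculus. -/
def fEps (ε : ℝ) (a : R) : R := cfcₙ (cutoff ε) a

/-- A densely defined 2-quasitrace on `R` (recorded by its values on positive elements;
the value on non-positive elements is normalised to `0`). -/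
structure QuasiTrace : Type _ where
  toFun : R → ℝ≥0∞
  zero_of_not_nonneg : ∀ a : R, ¬ (0 ≤ a) → toFun a = 0
  map_zero : toFun 0 = 0
  map_smul : ∀ (r : ℝ) (a : R), 0 < r → 0 ≤ a → toFun (r • a) = ENNReal.ofReal r * toFun a
  map_add_of_commute : ∀ a b : R, 0 ≤ a → 0 ≤ b → a * b = b * a →
    toFun (a + b) = toFun a + toFun b
  map_star_mul_self : ∀ x : R, toFun (star x * x) = toFun (x * star x)
  lowerSemicontinuousOn : LowerSemicontinuousOn toFun {a : R | 0 ≤ a}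
  finite_on_pedersen : ∀ a ∈ pedersen R, 0 ≤ a → toFun a < ∞
  exists_matrix_extension : ∃ σ : Matrix (Fin 2) (Fin 2) R → ℝ≥0∞,
    (∀ a : R, σ (fun i j => if i = 0 ∧ j = 0 then a else 0) = toFun a) ∧
    σ 0 = 0 ∧
    (∀ (r : ℝ) (x : Matrix (Fin 2) (Fin 2) R), 0 < r → (∃ y, x = star y * y) →
      σ (r • x) = ENNReal.ofReal r * σ x) ∧
    (∀ x y : Matrix (Fin 2) (Fin 2) R, (∃ z, x = star z * z) → (∃ z, y = star z * z) →
      x * y = y * x → σ (x + y) = σ x + σ y) ∧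
    (∀ x : Matrix (Fin 2) (Fin 2) R, σ (star x * x) = σ (x * star x))

/-- The topology of pointwise convergence on the Pedersen ideal. -/
instance : TopologicalSpace (QuasiTrace R) :=
  TopologicalSpace.induced (fun τ => fun a : pedersen R => τ.toFun a) inferInstance

variable {R}

/-- The zero quasitrace. -/
def QuasiTrace.IsZero (τ : QuasiTrace R) : Prop := ∀ a : R, τ.toFun a = 0

/-- The dimension function `d_τ(a) = lim_{ε → 0} τ(f_ε(a))`. -/
def dTau (τ : QuasiTrace R) (a : R) : ℝ≥0∞ :=
  ⨆ n : ℕ, τ.toFun (fEps (1 / (n + 1)) a)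

/-- `ω(a)` relative to a set `S` of quasitraces:
`lim_n sup {d_τ(a) - τ(f_{1/n}(a)) : τ ∈ S}`. -/
def omegaOn (S : Set (QuasiTrace R)) (a : R) : ℝ≥0∞ :=
  ⨅ n : ℕ, ⨆ τ ∈ S, (dTau τ a - τ.toFun (fEps (1 / (n + 1)) a))

/-- The seminorm `‖x‖_{2,S}`. -/
def norm2On (S : Set (QuasiTrace R)) (x : R) : ℝ≥0∞ :=
  ⨆ τ ∈ S, (τ.toFun (star x * x)) ^ (1 / 2 : ℝ)

variable (R)

/-- `R` has (Blackadar's) strict comparison. -/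
def StrictComparison : Prop :=
  ∀ a b : R, 0 ≤ a → 0 ≤ b →
    (∀ τ : QuasiTrace R, ¬ τ.IsZero → dTau τ a < dTau τ b) → CuntzLE a b

/-- `R` is a simple C*-algebra: it is nonzero and has no nontrivial closed two-sided ideals. -/
def IsSimpleCStar : Prop :=
  (∃ x : R, x ≠ 0) ∧
    ∀ I : TwoSidedIdeal R, IsClosed (I : Set R) → (I : Set R) = {0} ∨ (I : Set R) = Set.univ

/-- `R` is σ-unital: it contains a strictly positive element `h`
(equivalently, `Her(h) = R`). -/
def SigmaUnital : Prop := ∃ h : R, 0 ≤ h ∧ her h = Set.univ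

/-- `R` is elementary: isomorphic to the algebra of compact operators on some Hilbert space. -/
def IsElementary : Prop :=
  ∃ (H : Type) (_ : NormedAddCommGroup H) (_ : InnerProductSpace ℂ H) (_ : CompleteSpace H)
    (φ : R →⋆ₙₐ[ℂ] (H →L[ℂ] H)), Function.Injective φ ∧
      Set.range φ = {T : H →L[ℂ] H | IsCompactOperator (⇑T)}

/-- `R` is purely infinite: `R ≇ ℂ` and `b ≲ a` for all nonzero positive `a, b`. -/
def PurelyInfinite : Prop :=
  (¬ ∃ φ : R →⋆ₙₐ[ℂ] ℂ, Function.Bijective φ) ∧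
    ∀ a b : R, 0 ≤ a → 0 ≤ b → a ≠ 0 → b ≠ 0 → CuntzLE b a

/-- `R` is finite: its minimal unitization contains no non-unitary isometry. -/
def IsFiniteCStar : Prop :=
  ∀ v : Unitization ℂ R, star v * v = 1 → v * star v = 1

/-- `R` has stable rank one: the invertible elements are dense in the minimal unitization. -/
def StableRankOne : Prop := Dense {x : Unitization ℂ R | IsUnit x}

variable {R}

/-- `c` represents `n·[a]` in the Cuntz semigroup: it is the sum of `n` mutually
orthogonal positive elements, each Cuntz equivalent to `a`. -/
def IsNFoldRep (n : ℕ) (a c : R) : Prop :=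
  ∃ f : Fin n → R, (∀ i, 0 ≤ f i) ∧ (∀ i, CuntzEq (f i) a) ∧
    (∀ i j, i ≠ j → f i * f j = 0) ∧ c = ∑ i, f i

/-- `s` represents the supremum of the increasing sequence of Cuntz classes `[y n]`. -/
def IsCuntzLUB (y : ℕ → R) (s : R) : Prop :=
  (∀ n, CuntzLE (y n) s) ∧ ∀ c : R, 0 ≤ c → (∀ n, CuntzLE (y n) c) → CuntzLE s c

/-- `[x] ≪ [y]` in the Cuntz semigroup. -/
def CuntzWayBelow (x y : R) : Prop :=
  ∀ yseq : ℕ → R, (∀ n, 0 ≤ yseq n) → (∀ n, CuntzLE (yseq n) (yseq (n + 1))) →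
    ∀ s : R, 0 ≤ s → IsCuntzLUB yseq s → CuntzLE y s → ∃ n₀, CuntzLE x (yseq n₀)

variable (R)

/-- The Cuntz semigroup of `R` is almost unperforated. -/
def AlmostUnperforated : Prop :=
  ∀ (a b : R) (k : ℕ), 1 ≤ k → 0 ≤ a → 0 ≤ b →
    (∃ c d : R, IsNFoldRep (k + 1) a c ∧ IsNFoldRep k b d ∧ CuntzLE c d) → CuntzLE a b

/-- The Cuntz semigroup of `R` is almost divisible. -/
def AlmostDivisible : Prop :=
  ∀ x y : R, 0 ≤ x → 0 ≤ y → CuntzWayBelow x y → ∀ n : ℕ, 1 ≤ n →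
    ∃ z : R, 0 ≤ z ∧ (∃ c : R, IsNFoldRep n z c ∧ CuntzLE c y) ∧
      (∃ c : R, IsNFoldRep (n + 1) z c ∧ CuntzLE x c)

/-! ### The stabilization `W ≅ A ⊗ K` -/

variable (A W : Type*) [NonUnitalCStarAlgebra A] [PartialOrder A] [StarOrderedRing A]
  [NonUnitalCStarAlgebra W] [PartialOrder W] [StarOrderedRing W]

/-- A realization of `W` as the stabilization `A ⊗ K`: the maps `emb i j : a ↦ a ⊗ e_{ij}`
are isometric, satisfy the matrix-unit relations, and have dense joint linear span. -/
structure Stabilization : Type _ where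
  emb : ℕ → ℕ → (A →ₗ[ℂ] W)
  emb_mul : ∀ (i j k l : ℕ) (a b : A),
    emb i j a * emb k l b = if j = k then emb i l (a * b) else 0
  emb_star : ∀ (i j : ℕ) (a : A), star (emb i j a) = emb j i (star a)
  norm_emb : ∀ (i j : ℕ) (a : A), ‖emb i j a‖ = ‖a‖
  dense_span : Dense (Submodule.span ℂ {w : W | ∃ (i j : ℕ) (a : A), w = emb i j a} : Set W)

variable {A W}

/-- The set `QT(A)` of quasitraces normalized on `A ⊆ A ⊗ K`. -/
def QTSet (SB : Stabilization A W) : Set (QuasiTrace W) :=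
  {τ | (⨆ a : {a : A // 0 ≤ a ∧ ‖a‖ ≤ 1}, τ.toFun (SB.emb 0 0 a)) = 1}

/-- The quasitraces normalized on the hereditary subalgebra `Her(c) ⊆ W`. -/
def QTSetHer (c : W) : Set (QuasiTrace W) :=
  {τ : QuasiTrace W |
    (⨆ a : {a : W // a ∈ her c ∧ 0 ≤ a ∧ ‖a‖ ≤ 1}, τ.toFun a) = 1}

/-- `ω(a) = 0` for `a ∈ W = A ⊗ K`, computed relative to `\overline{QT(Her(e))}^w`
for any nonzero `e ∈ Ped(A)₊`. -/
def OmegaZero (SB : Stabilization A W) (a : W) : Prop :=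
  ∀ e : A, 0 ≤ e → e ≠ 0 → e ∈ pedersen A →
    omegaOn (closure (QTSetHer (SB.emb 0 0 e))) a = 0

/-- `A` has tracial approximate oscillation zero. -/
def TAOZ (SB : Stabilization A W) : Prop :=
  ∀ e : A, 0 ≤ e → e ≠ 0 → e ∈ pedersen A →
    ∀ a : W, 0 ≤ a → a ∈ pedersen W →
      ∃ b : ℕ → W, (∀ n, 0 ≤ b n) ∧ (∀ n, ‖b n‖ ≤ 1) ∧
        (∀ n, b n ∈ pedersenIn (her a)) ∧
        Tendsto (fun n => omegaOn (closure (QTSetHer (SB.emb 0 0 e))) (b n)) atTop (𝓝 0) ∧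
        Tendsto (fun n => norm2On (closure (QTSetHer (SB.emb 0 0 e))) (a - b n)) atTop (𝓝 0)

/-! ### Affine functions on the quasitrace cone and the map `Γ` -/

variable (W) in
/-- `ρ = t·τ + (1-t)·σ` as quasitraces. -/
def IsCombo (t : ℝ) (τ σ ρ : QuasiTrace W) : Prop :=
  ∀ a : W, 0 ≤ a →
    ρ.toFun a = ENNReal.ofReal t * τ.toFun a + ENNReal.ofReal (1 - t) * σ.toFun a

variable (W) in
/-- `f` is affine on the quasitrace cone. -/
def IsAffineQT (f : QuasiTrace W → ℝ≥0∞) : Prop :=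
  ∀ t : ℝ, 0 ≤ t → t ≤ 1 → ∀ τ σ ρ : QuasiTrace W, IsCombo W t τ σ ρ →
    f ρ = ENNReal.ofReal t * f τ + ENNReal.ofReal (1 - t) * f σ

variable (W) in
/-- Membership in `Aff₊(QT̃(A))`. -/
def MemAffPlus (f : QuasiTrace W → ℝ≥0∞) : Prop :=
  (∀ τ, f τ = 0) ∨
    (Continuous f ∧ IsAffineQT W f ∧ (∀ τ, f τ < ∞) ∧
      (∀ τ : QuasiTrace W, ¬ τ.IsZero → 0 < f τ) ∧
      (∀ τ : QuasiTrace W, τ.IsZero → f τ = 0))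

variable (W) in
/-- Membership in `LAff₊(QT̃(A))`. -/
def MemLAffPlus (f : QuasiTrace W → ℝ≥0∞) : Prop :=
  ∃ g : ℕ → QuasiTrace W → ℝ≥0∞, (∀ n, MemAffPlus W (g n)) ∧
    (∀ n τ, g n τ ≤ g (n + 1) τ) ∧ ∀ τ, f τ = ⨆ n, g n τ

variable (W) in
/-- The canonical map `Γ : Cu(A) → LAff₊(QT̃(A))`, `Γ([a])(τ) = d_τ(a)`, is surjective. -/
def GammaSurjective : Prop :=
  ∀ f : QuasiTrace W → ℝ≥0∞, MemLAffPlus W f →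
    ∃ a : W, 0 ≤ a ∧ ∀ τ : QuasiTrace W, dTau τ a = f τ

/-!
Write `a = x*x`. Functions of `a` supported near `0` have small dimension at every normalized
quasitrace because `ω(a) = 0`, so by strict comparison they are Cuntz below `u*u` for each nonzero
`u ∈ A`, once the support is close enough to `0`. If `0` is isolated in the spectrum of `a` then
`x = x f_δ(a)` for some `δ`, which lies in the Pedersen ideal. Otherwise the comparison, applied to
pairs of disjoint bumps, splits any nonzero element of `A` into two orthogonal ones; iterating gives
`uₖ ∈ A` with `uₖ* uₗ = 0` for `k ≠ l` and `g uₖ = uₖ` for a single `g ∈ Ped(A)`. Now cut `a` into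
bumps `bₖ` whose supports tend to `0`, and factor `x bₖ = (yₖ uₖ*) (uₖ zₖ)`. By orthogonality
`∑ x bₖ = (∑ 2ᵏ yₖ uₖ*) (∑ 2⁻ᵏ uₖ zₖ)`, and the second factor is fixed by `g`. So the tail of `x`
lies in the Pedersen ideal, as does the rest, `x f_{t₀}(a)`.
-/

section Cutoffs

theorem continuous_cutoff (ε : ℝ) : Continuous (cutoff ε) := by
  unfold cutoff
  fun_prop

theorem cutoff_nonneg (ε t : ℝ) : 0 ≤ cutoff ε t :=
  le_min zero_le_one (le_max_left _ _)

theorem cutoff_le_one (ε t : ℝ) : cutoff ε t ≤ 1 := min_le_left _ _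

theorem cutoff_eq_zero {ε t : ℝ} (hε : 0 < ε) (h : t ≤ ε / 2) : cutoff ε t = 0 := by
  have : 2 * t / ε - 1 ≤ 0 := by
    rw [sub_nonpos, div_le_one hε]
    linarith
  rw [cutoff, max_eq_left this, min_eq_right zero_le_one]

theorem cutoff_eq_one {ε t : ℝ} (hε : 0 < ε) (h : ε ≤ t) : cutoff ε t = 1 := by
  have : 2 ≤ 2 * t / ε := by
    rw [le_div_iff₀ hε]
    linarith
  exact min_eq_left (le_max_of_le_right (by linarith))

theorem cutoff_antitone {ε δ : ℝ} (hε : 0 < ε) (h : ε ≤ δ) (t : ℝ) :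
    cutoff δ t ≤ cutoff ε t := by
  rcases le_or_gt t 0 with ht | ht
  · rw [cutoff_eq_zero (hε.trans_le h) (by linarith)]
    exact cutoff_nonneg ε t
  · unfold cutoff
    gcongr

theorem cutoff_eventuallyEq_zero {ε : ℝ} (hε : 0 < ε) : cutoff ε =ᶠ[𝓝 0] 0 := by
  filter_upwards [Iic_mem_nhds (half_pos hε)] with t ht using cutoff_eq_zero hε ht

theorem cutoff_mul_cutoff {ε δ : ℝ} (hε : 0 < ε) (h : ε ≤ δ / 2) (t : ℝ) :
    cutoff ε t * cutoff δ t = cutoff δ t := by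
  rcases le_total t (δ / 2) with ht | ht
  · rw [cutoff_eq_zero (by linarith) ht, mul_zero]
  · rw [cutoff_eq_one hε (h.trans ht), one_mul]

/-- The continuous function `cutoff ε t / t`, written so that the value at `t = 0` is no junk
value: `cutoff ε` vanishes where the denominator is not `t`. -/
def cutoffDiv (ε : ℝ) : ℝ → ℝ := fun t => cutoff ε t / max t (ε / 2)

theorem continuous_cutoffDiv {ε : ℝ} (hε : 0 < ε) : Continuous (cutoffDiv ε) :=
  (continuous_cutoff ε).div (by fun_prop) fun _ => (lt_max_of_lt_right (half_pos hε)).ne'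

theorem cutoffDiv_zero {ε : ℝ} (hε : 0 < ε) : cutoffDiv ε 0 = 0 := by
  rw [cutoffDiv, cutoff_eq_zero hε (half_pos hε).le, zero_div]

theorem cutoffDiv_mul_self {ε : ℝ} (hε : 0 < ε) (t : ℝ) : cutoffDiv ε t * t = cutoff ε t := by
  rcases le_or_gt t (ε / 2) with h | h
  · rw [cutoffDiv, cutoff_eq_zero hε h, zero_div, zero_mul]
  · rw [cutoffDiv, max_eq_left h.le, div_mul_cancel₀ _ ((half_pos hε).trans h).ne']

/-- A continuous function supported on `[s/2, t]` and equal to `1` on `[s, t/2]`; it is meant for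
`0 < s ≤ t`. -/
def bump (s t : ℝ) : ℝ → ℝ := fun x => cutoff s x - cutoff t x

theorem continuous_bump (s t : ℝ) : Continuous (bump s t) :=
  (continuous_cutoff s).sub (continuous_cutoff t)

theorem bump_nonneg {s t : ℝ} (hs : 0 < s) (h : s ≤ t) (x : ℝ) : 0 ≤ bump s t x :=
  sub_nonneg.2 (cutoff_antitone hs h x)

theorem bump_le_one (s t x : ℝ) : bump s t x ≤ 1 := by
  unfold bump
  linarith [cutoff_le_one s x, cutoff_nonneg t x]

theorem bump_eq_zero_of_le {s t x : ℝ} (hs : 0 < s) (h : s ≤ t) (hx : x ≤ s / 2) :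
    bump s t x = 0 := by
  rw [bump, cutoff_eq_zero hs hx, cutoff_eq_zero (hs.trans_le h) (by linarith), sub_zero]

theorem bump_eq_zero_of_ge {s t x : ℝ} (hs : 0 < s) (h : s ≤ t) (hx : t ≤ x) :
    bump s t x = 0 := by
  rw [bump, cutoff_eq_one hs (h.trans hx), cutoff_eq_one (hs.trans_le h) hx, sub_self]

theorem bump_eq_one {s t x : ℝ} (hs : 0 < s) (ht : 0 < t) (hsx : s ≤ x) (hxt : x ≤ t / 2) :
    bump s t x = 1 := by
  rw [bump, cutoff_eq_one hs hsx, cutoff_eq_zero ht hxt, sub_zero]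

theorem bump_zero {s t : ℝ} (hs : 0 < s) (h : s ≤ t) : bump s t 0 = 0 :=
  bump_eq_zero_of_le hs h (half_pos hs).le

theorem bump_mul_bump {r s t T : ℝ} (hr : 0 < r) (hrs : r ≤ s / 2) (hst : s ≤ t)
    (htT : 2 * t ≤ T) (x : ℝ) : bump r T x * bump s t x = bump s t x := by
  rcases le_total x (s / 2) with hx | hx
  · rw [bump_eq_zero_of_le (by linarith) hst hx, mul_zero]
  rcases le_total t x with hx' | hx'
  · rw [bump_eq_zero_of_ge (by linarith) hst hx', mul_zero]
  · rw [bump_eq_one hr (by linarith) (by linarith) (by linarith), one_mul]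

theorem bump_mul_bump_eq_zero {s t s' t' : ℝ} (hs : 0 < s) (hst : s ≤ t) (hs' : 0 < s')
    (hst' : s' ≤ t') (h : t' ≤ s / 2) (x : ℝ) : bump s t x * bump s' t' x = 0 := by
  rcases le_total x (s / 2) with hx | hx
  · rw [bump_eq_zero_of_le hs hst hx, zero_mul]
  · rw [bump_eq_zero_of_ge hs' hst' (h.trans hx), mul_zero]

end Cutoffs

section FunctionalCalculus

variable {B : Type*} [NonUnitalCStarAlgebra B]

theorem star_cfcₙ_real (f : ℝ → ℝ) (a : B) : star (cfcₙ f a) = cfcₙ f a := by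
  rw [← cfcₙ_star]
  simp only [star_trivial]

theorem cfcₙ_mul_of_mul_eq {f g k : ℝ → ℝ} (a : B) (hf : Continuous f) (hf0 : f 0 = 0)
    (hg : Continuous g) (hg0 : g 0 = 0) (h : ∀ t, f t * g t = k t) :
    cfcₙ f a * cfcₙ g a = cfcₙ k a := by
  rw [← cfcₙ_mul f g a hf.continuousOn hf0 hg.continuousOn hg0]
  exact cfcₙ_congr fun t _ => h t

theorem fEps_mul_fEps (a : B) {ε δ : ℝ} (hε : 0 < ε) (h : ε ≤ δ / 2) :
    fEps ε a * fEps δ a = fEps δ a :=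
  cfcₙ_mul_of_mul_eq a (continuous_cutoff ε) (cutoff_eventuallyEq_zero hε).eq_of_nhds
    (continuous_cutoff δ) (cutoff_eventuallyEq_zero (by linarith)).eq_of_nhds
    (cutoff_mul_cutoff hε h)

theorem norm_cfcₙ_le_one {f : ℝ → ℝ} (a : B) (h0 : ∀ t, 0 ≤ f t) (h1 : ∀ t, f t ≤ 1) :
    ‖cfcₙ f a‖ ≤ 1 :=
  norm_cfcₙ_le fun t _ => by
    rw [Real.norm_of_nonneg (h0 t)]
    exact h1 t

variable [PartialOrder B] [StarOrderedRing B]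

theorem cutoffDiv_mul_eq_fEps {a : B} (ha : 0 ≤ a) {ε : ℝ} (hε : 0 < ε) :
    cfcₙ (cutoffDiv ε) a * a = fEps ε a := by
  nth_rw 2 [← cfcₙ_id' ℝ a ha.isSelfAdjoint]
  exact cfcₙ_mul_of_mul_eq a (continuous_cutoffDiv hε) (cutoffDiv_zero hε) continuous_id rfl
    (cutoffDiv_mul_self hε)

theorem exists_fEps_mul_cfcₙ {a : B} (ha : 0 ≤ a) {f : ℝ → ℝ} (hf : Continuous f)
    (hf0 : f =ᶠ[𝓝 0] 0) : ∃ ε > 0, fEps ε a * cfcₙ f a = cfcₙ f a := by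
  obtain ⟨ε, hε, h⟩ := Metric.eventually_nhds_iff.1 hf0
  have hcut : ∀ t, 0 ≤ t → cutoff ε t * f t = f t := fun t ht => by
    rcases lt_or_ge t ε with htε | htε
    · rw [h (by rwa [Real.dist_eq, sub_zero, abs_of_nonneg ht]), Pi.zero_apply, mul_zero]
    · rw [cutoff_eq_one hε htε, one_mul]
  refine ⟨ε, hε, ?_⟩
  rw [fEps, ← cfcₙ_mul _ f a (continuous_cutoff ε).continuousOn
    (cutoff_eventuallyEq_zero hε).eq_of_nhds hf.continuousOn hf0.eq_of_nhds]
  exact cfcₙ_congr fun t ht => hcut t (quasispectrum_nonneg_of_nonneg a ha t ht)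

theorem norm_le_of_fEps_eq_zero {a : B} (ha : 0 ≤ a) {ε : ℝ} (hε : 0 < ε) (h : fEps ε a = 0) :
    ‖a‖ ≤ ε := by
  rw [← cfcₙ_id' ℝ a ha.isSelfAdjoint]
  refine norm_cfcₙ_le fun t ht => ?_
  rw [Real.norm_of_nonneg (quasispectrum_nonneg_of_nonneg a ha t ht)]
  by_contra! hεt
  have := norm_apply_le_norm_cfcₙ (cutoff ε) a ht (continuous_cutoff ε).continuousOn
    (cutoff_eventuallyEq_zero hε).eq_of_nhds ha.isSelfAdjoint
  rw [cutoff_eq_one hε hεt.le, norm_one, ← fEps, h, norm_zero] at this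
  linarith

end FunctionalCalculus

section QuasiInverse

variable {B : Type*}

/- The equation says `(1 + q) * (1 - d) = 1` in the unitization. -/
theorem exists_quasi_inverse [NonUnitalNormedRing B] [CompleteSpace B] {d : B}
    (hd : ‖d‖ ≤ 1 / 2) : ∃ q : B, q - q * d = d ∧ ‖q‖ ≤ 1 := by
  have hcontr : ContractingWith (1 / 2) fun q : B => d + q * d := by
    refine ⟨by rw [← NNReal.coe_lt_coe]; norm_num, LipschitzWith.of_dist_le_mul fun y z => ?_⟩
    rw [dist_add_left, dist_eq_norm, ← sub_mul, dist_eq_norm, mul_comm]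
    refine (norm_mul_le _ _).trans ?_
    gcongr
    exact_mod_cast hd
  obtain ⟨q, hq, -⟩ := hcontr.exists_fixedPoint 0 (edist_ne_top _ _)
  have hfix : d + q * d = q := hq
  refine ⟨q, sub_eq_iff_eq_add.2 hfix.symm, ?_⟩
  have hnorm : ‖q‖ ≤ ‖d‖ + ‖q‖ * ‖d‖ := by
    conv_lhs => rw [← hfix]
    exact (norm_add_le _ _).trans (add_le_add_right (norm_mul_le _ _) _)
  nlinarith [norm_nonneg q]

variable [NonUnitalCStarAlgebra B]

theorem CuntzLE.exists_factorization {p u : B} (hp : ‖p‖ ≤ 1) (h : CuntzLE p (star u * u)) :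
    ∃ r s : B, ‖u * r‖ ≤ 2 ∧ ‖s * star u‖ ≤ 4 ∧
      ∀ c, p * c = c → s * star u * (u * r) * c = c := by
  obtain ⟨x, hx⟩ := h
  obtain ⟨n, hn⟩ := ((tendsto_order.1 hx).2 (1 / 2) (by norm_num)).exists
  set R := u * x n
  set d := p - star R * R with hd
  have hdR : star R * R = p - d := (sub_sub_cancel p _).symm
  have hdn : ‖d‖ ≤ 1 / 2 := by
    simpa only [hd, R, star_mul, mul_assoc] using hn.le
  have hRn : ‖R‖ ≤ 2 := by
    have : ‖R‖ * ‖R‖ ≤ 1 + 1 / 2 := by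
      rw [← CStarRing.norm_star_mul_self, hdR]
      exact (norm_sub_le _ _).trans (add_le_add hp hdn)
    nlinarith
  obtain ⟨q, hq, hqn⟩ := exists_quasi_inverse hdn
  have hs : (star (x n) + q * star (x n)) * star u = star R + q * star R := by
    rw [star_mul, add_mul, mul_assoc q]
  refine ⟨x n, star (x n) + q * star (x n), hRn, ?_, fun c hc => ?_⟩
  · rw [hs]
    have := norm_mul_le q (star R)
    rw [norm_star] at this
    have := norm_add_le (star R) (q * star R)
    rw [norm_star] at this
    nlinarith [norm_nonneg R]
  · calc (star (x n) + q * star (x n)) * star u * R * c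
        = star R * R * c + q * (star R * R * c) := by rw [hs]; noncomm_ring
      _ = (c - d * c) + q * (c - d * c) := by rw [hdR, sub_mul, hc]
      _ = c + (q - q * d - d) * c := by noncomm_ring
      _ = c := by rw [hq, sub_self, zero_mul, add_zero]

end QuasiInverse

section Ideals

variable {B : Type*} [NonUnitalCStarAlgebra B]

theorem IsIdealIn.add_mem {S J : Set B} (hJ : IsIdealIn B S J) {x y : B} (hx : x ∈ J)
    (hy : y ∈ J) : x + y ∈ J := hJ.2.2.1 x hx y hy

theorem IsIdealIn.mul_mem_right {J : Set B} (hJ : IsIdealIn B Set.univ J) {x : B} (hx : x ∈ J)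
    (b : B) : x * b ∈ J := (hJ.2.2.2.2 x hx b (Set.mem_univ b)).1

theorem IsIdealIn.mul_mem_left {J : Set B} (hJ : IsIdealIn B Set.univ J) {x : B} (hx : x ∈ J)
    (b : B) : b * x ∈ J := (hJ.2.2.2.2 x hx b (Set.mem_univ b)).2

theorem mem_pedersen_iff {b : B} :
    b ∈ pedersen B ↔ ∀ J : Set B, IsIdealIn B Set.univ J → Dense J → b ∈ J := by
  simp only [pedersen, pedersenIn, Set.mem_iInter, Set.mem_ofPred_eq, and_imp, Set.univ_subset_iff,
    dense_iff_closure_eq]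

theorem isIdealIn_pedersen : IsIdealIn B Set.univ (pedersen B) := by
  refine ⟨Set.subset_univ _, mem_pedersen_iff.2 fun J hJ _ => hJ.2.1, fun x hx y hy => ?_,
    fun x hx => ?_, fun x hx b _ => ⟨?_, ?_⟩⟩ <;>
    refine mem_pedersen_iff.2 fun J hJ hd => ?_
  · exact hJ.add_mem (mem_pedersen_iff.1 hx J hJ hd) (mem_pedersen_iff.1 hy J hJ hd)
  · exact hJ.2.2.2.1 x (mem_pedersen_iff.1 hx J hJ hd)
  · exact hJ.mul_mem_right (mem_pedersen_iff.1 hx J hJ hd) b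
  · exact hJ.mul_mem_left (mem_pedersen_iff.1 hx J hJ hd) b

variable [PartialOrder B] [StarOrderedRing B]

theorem IsIdealIn.cfcₙ_mem {J : Set B} (hJ : IsIdealIn B Set.univ J) (hd : Dense J) {b : B}
    (hb : 0 ≤ b) {f : ℝ → ℝ} (hf : Continuous f) (hf0 : f =ᶠ[𝓝 0] 0) : cfcₙ f b ∈ J := by
  obtain ⟨ε, hε, hεf⟩ := exists_fEps_mul_cfcₙ hb hf hf0
  set k := cfcₙ (cutoffDiv ε) b
  set F := cfcₙ f b
  have hclose : ∀ᶠ z in 𝓝 b, ‖k * (b - z)‖ < 1 / 2 := by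
    have hcont : Continuous fun z => ‖k * (b - z)‖ := by fun_prop
    exact (tendsto_order.1 (hcont.tendsto' b 0 (by simp))).2 _ (by norm_num)
  obtain ⟨z, hz, hzd⟩ := ((mem_closure_iff_frequently.1 (hd b)).and_eventually hclose).exists
  obtain ⟨q, hq, -⟩ := exists_quasi_inverse hzd.le
  have hdF : k * (b - z) * F = F - k * z * F := by
    rw [mul_sub, cutoffDiv_mul_eq_fEps hb hε, sub_mul, hεf]
  have hF : F = k * z * F + q * (k * z * F) :=
    calc F = k * z * F + k * (b - z) * F := by rw [hdF, add_sub_cancel]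
      _ = k * z * F + q * (F - k * (b - z) * F) := by nth_rw 1 [← hq]; noncomm_ring
      _ = k * z * F + q * (k * z * F) := by rw [hdF, sub_sub_cancel]
  have hmem : k * z * F ∈ J := hJ.mul_mem_right (hJ.mul_mem_left hz k) F
  rw [hF]
  exact hJ.add_mem hmem (hJ.mul_mem_left hmem q)

theorem cfcₙ_mem_pedersen {b : B} (hb : 0 ≤ b) {f : ℝ → ℝ} (hf : Continuous f)
    (hf0 : f =ᶠ[𝓝 0] 0) : cfcₙ f b ∈ pedersen B :=
  mem_pedersen_iff.2 fun _ hJ hd => hJ.cfcₙ_mem hd hb hf hf0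

theorem fEps_mem_pedersen {b : B} (hb : 0 ≤ b) {ε : ℝ} (hε : 0 < ε) : fEps ε b ∈ pedersen B :=
  cfcₙ_mem_pedersen hb (continuous_cutoff ε) (cutoff_eventuallyEq_zero hε)

theorem norm_mul_cfcₙ_sq_le (x : B) {f : ℝ → ℝ} (hf : Continuous f) (hf0 : f 0 = 0) {c : ℝ}
    (h : ∀ t, 0 ≤ t → t * f t ^ 2 ≤ c) : ‖x * cfcₙ f (star x * x)‖ ^ 2 ≤ c := by
  have ha := star_mul_self_nonneg x
  have key : star (x * cfcₙ f (star x * x)) * (x * cfcₙ f (star x * x)) =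
      cfcₙ (fun t => f t * t * f t) (star x * x) := by
    rw [cfcₙ_mul _ f _, cfcₙ_mul f _ _, cfcₙ_id' ℝ (star x * x), star_mul, star_cfcₙ_real]
    noncomm_ring
  rw [sq, ← CStarRing.norm_star_mul_self, key]
  refine norm_cfcₙ_le fun t ht => ?_
  have ht0 := quasispectrum_nonneg_of_nonneg _ ha t ht
  rw [show f t * t * f t = t * f t ^ 2 by ring,
    Real.norm_of_nonneg (mul_nonneg ht0 (sq_nonneg _))]
  exact h t ht0

theorem norm_sub_mul_cfcₙ_sq_le (x : B) {f : ℝ → ℝ} (hf : Continuous f) (hf0 : f 0 = 0) {c : ℝ}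
    (h : ∀ t ∈ quasispectrum ℝ (star x * x), t * (1 - f t) ^ 2 ≤ c) :
    ‖x - x * cfcₙ f (star x * x)‖ ^ 2 ≤ c := by
  have ha := star_mul_self_nonneg x
  have key : star (x - x * cfcₙ f (star x * x)) * (x - x * cfcₙ f (star x * x)) =
      cfcₙ (fun t => t - t * f t - (f t * t - f t * t * f t)) (star x * x) := by
    rw [cfcₙ_sub _ _ _, cfcₙ_sub _ _ _, cfcₙ_sub _ _ _, cfcₙ_mul _ f _, cfcₙ_mul _ f _,
      cfcₙ_mul f _ _, cfcₙ_id' ℝ (star x * x), star_sub, star_mul, star_cfcₙ_real]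
    noncomm_ring
  rw [sq, ← CStarRing.norm_star_mul_self, key]
  refine norm_cfcₙ_le fun t ht => ?_
  rw [show t - t * f t - (f t * t - f t * t * f t) = t * (1 - f t) ^ 2 by ring,
    Real.norm_of_nonneg (mul_nonneg (quasispectrum_nonneg_of_nonneg _ ha t ht) (sq_nonneg _))]
  exact h t ht

theorem norm_sub_mul_fEps_sq_le (x : B) {ε : ℝ} (hε : 0 < ε) :
    ‖x - x * fEps ε (star x * x)‖ ^ 2 ≤ ε := by
  refine norm_sub_mul_cfcₙ_sq_le x (continuous_cutoff ε)
    (cutoff_eventuallyEq_zero hε).eq_of_nhds fun t _ => ?_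
  rcases le_total ε t with htε | htε
  · simp [cutoff_eq_one hε htε, hε.le]
  · calc t * (1 - cutoff ε t) ^ 2 ≤ ε * 1 ^ 2 := by
          gcongr
          · linarith [cutoff_le_one ε t]
          · linarith [cutoff_nonneg ε t]
      _ = ε := by ring

theorem tendsto_mul_fEps (x : B) :
    Tendsto (fun ε => x * fEps ε (star x * x)) (𝓝[>] 0) (𝓝 x) := by
  have hsqrt : Tendsto Real.sqrt (𝓝[>] 0) (𝓝 0) :=
    (Real.continuous_sqrt.tendsto' 0 0 Real.sqrt_zero).mono_left nhdsWithin_le_nhds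
  refine tendsto_iff_norm_sub_tendsto_zero.2 (squeeze_zero' (Eventually.of_forall fun _ =>
    norm_nonneg _) ?_ hsqrt)
  filter_upwards [self_mem_nhdsWithin] with ε hε
  rw [norm_sub_rev]
  exact Real.le_sqrt_of_sq_le (norm_sub_mul_fEps_sq_le x hε)

theorem mem_closure_range_mul (x : B) : x ∈ closure (Set.range (x * ·)) :=
  mem_closure_of_tendsto (tendsto_mul_fEps x) (Eventually.of_forall fun _ => ⟨_, rfl⟩)

theorem mem_closure_range_mul_left (x : B) : x ∈ closure (Set.range (· * x)) := by
  have := map_mem_closure continuous_star (mem_closure_range_mul (star x))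
    (t := Set.range (· * x)) (by rintro _ ⟨c, rfl⟩; exact ⟨star c, by simp⟩)
  rwa [star_star] at this

theorem mem_of_forall_mul_mul_mem {K : Set B} (hK : IsClosed K) {x : B}
    (h : ∀ b c, b * x * c ∈ K) : x ∈ K := by
  have hleft : ∀ b, b * x ∈ K := fun b =>
    closure_minimal (by rintro _ ⟨c, rfl⟩; exact h b c) hK (mem_closure_range_mul (b * x))
  exact closure_minimal (by rintro _ ⟨b, rfl⟩; exact hleft b) hK (mem_closure_range_mul_left x)

theorem dense_pedersen : Dense (pedersen B) := fun x =>
  mem_closure_of_tendsto (tendsto_mul_fEps x) <| by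
    filter_upwards [self_mem_nhdsWithin] with ε hε
    exact isIdealIn_pedersen.mul_mem_left (fEps_mem_pedersen (star_mul_self_nonneg x) hε) x

end Ideals

section ClosedIdeals

variable {B : Type*} [NonUnitalCStarAlgebra B]

theorem IsIdealIn.closure {J : Set B} (hJ : IsIdealIn B Set.univ J) :
    IsIdealIn B Set.univ (closure J) :=
  ⟨Set.subset_univ _, subset_closure hJ.2.1,
    fun _ hx _ hy => map_mem_closure₂ continuous_add hx hy fun _ ha _ hb => hJ.add_mem ha hb,
    fun _ hx => map_mem_closure continuous_neg hx hJ.2.2.2.1,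
    fun _ hx b _ =>
      ⟨map_mem_closure (f := (· * b)) (by fun_prop) hx fun _ ha => hJ.mul_mem_right ha b,
        map_mem_closure (f := (b * ·)) (by fun_prop) hx fun _ ha => hJ.mul_mem_left ha b⟩⟩

theorem IsIdealIn.preimage {C : Type*} [NonUnitalCStarAlgebra C] {J : Set C}
    (hJ : IsIdealIn C Set.univ J) (φ : B →⋆ₙₐ[ℂ] C) : IsIdealIn B Set.univ (φ ⁻¹' J) := by
  refine ⟨Set.subset_univ _, ?_, fun x hx y hy => ?_, fun x hx => ?_, fun x hx b _ => ⟨?_, ?_⟩⟩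
  · simpa only [Set.mem_preimage, map_zero] using hJ.2.1
  · simpa only [Set.mem_preimage, map_add] using hJ.add_mem hx hy
  · simpa only [Set.mem_preimage, map_neg] using hJ.2.2.2.1 _ hx
  · simpa only [Set.mem_preimage, map_mul] using hJ.mul_mem_right hx (φ b)
  · simpa only [Set.mem_preimage, map_mul] using hJ.mul_mem_left hx (φ b)

theorem IsSimpleCStar.eq_univ_of_isIdealIn (hB : IsSimpleCStar B) {J : Set B}
    (hJ : IsIdealIn B Set.univ J) (hcl : IsClosed J) {b : B} (hb : b ∈ J) (hne : b ≠ 0) :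
    J = Set.univ := by
  let I : TwoSidedIdeal B := TwoSidedIdeal.mk' J hJ.2.1 hJ.add_mem (hJ.2.2.2.1 _)
    (fun hy => hJ.mul_mem_left hy _) (fun hx => hJ.mul_mem_right hx _)
  have hI : (I : Set B) = J := TwoSidedIdeal.coe_mk' ..
  rcases hB.2 I (hI ▸ hcl) with h | h
  · rw [← hI, h] at hb
    exact absurd hb hne
  · rw [← hI, h]

/-- The algebraic two-sided ideal of sums of products `u * s * v` with `s ∈ S`. In a non-unital
algebra it need not contain `S` itself. -/
def idealSpan (S : Set B) : Set B :=
  AddSubgroup.closure {x : B | ∃ u, ∃ s ∈ S, ∃ v, x = u * s * v}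

theorem mul_mul_mem_idealSpan {S : Set B} {s : B} (hs : s ∈ S) (u v : B) :
    u * s * v ∈ idealSpan S :=
  AddSubgroup.subset_closure ⟨u, s, hs, v, rfl⟩

theorem isIdealIn_idealSpan (S : Set B) : IsIdealIn B Set.univ (idealSpan S) := by
  set G := AddSubgroup.closure {x : B | ∃ u, ∃ s ∈ S, ∃ v, x = u * s * v}
  have hright (b : B) : G ≤ G.comap (AddMonoidHom.mulRight b) := by
    rw [AddSubgroup.closure_le]
    rintro _ ⟨u, s, hs, v, rfl⟩
    exact AddSubgroup.subset_closure ⟨u, s, hs, v * b, mul_assoc _ v b⟩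
  have hleft (b : B) : G ≤ G.comap (AddMonoidHom.mulLeft b) := by
    rw [AddSubgroup.closure_le]
    rintro _ ⟨u, s, hs, v, rfl⟩
    refine AddSubgroup.subset_closure ⟨b * u, s, hs, v, ?_⟩
    rw [AddMonoidHom.coe_mulLeft, mul_assoc b, mul_assoc b]
  exact ⟨Set.subset_univ _, zero_mem G, fun _ hx _ hy => add_mem hx hy,
    fun _ hx => neg_mem hx, fun _ hx b _ => ⟨hright b hx, hleft b hx⟩⟩

theorem exists_eq_sum_of_mem_idealSpan {c x : B} (hx : x ∈ idealSpan {c}) :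
    ∃ (n : ℕ) (u v : Fin n → B), x = ∑ i, u i * c * v i := by
  induction hx using AddSubgroup.closure_induction with
  | mem x hx =>
    obtain ⟨u, _, rfl, v, rfl⟩ := hx
    exact ⟨1, fun _ => u, fun _ => v, by simp⟩
  | zero => exact ⟨0, Fin.elim0, Fin.elim0, by simp⟩
  | add x y _ _ hx hy =>
    obtain ⟨n, u, v, rfl⟩ := hx
    obtain ⟨m, u', v', rfl⟩ := hy
    exact ⟨n + m, Fin.append u u', Fin.append v v', by
      simp only [Fin.sum_univ_add, Fin.append_left, Fin.append_right]⟩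
  | neg x _ hx =>
    obtain ⟨n, u, v, rfl⟩ := hx
    exact ⟨n, fun i => -u i, v, by simp only [neg_mul, Finset.sum_neg_distrib]⟩

theorem subset_closure_idealSpan [PartialOrder B] [StarOrderedRing B] (S : Set B) :
    S ⊆ closure (idealSpan S) := fun _ hs =>
  mem_of_forall_mul_mul_mem isClosed_closure fun b c =>
    subset_closure (mul_mul_mem_idealSpan hs b c)

end ClosedIdeals

namespace Stabilization

section Corner

variable {A W : Type*} [NonUnitalCStarAlgebra A] [NonUnitalCStarAlgebra W]

/-- The inclusion of `A` into `A ⊗ K` as the corner `A ⊗ e₁₁`, as a star homomorphism. -/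
def hom (SB : Stabilization A W) : A →⋆ₙₐ[ℂ] W where
  toFun := SB.emb 0 0
  map_smul' r a := map_smul (SB.emb 0 0) r a
  map_zero' := map_zero (SB.emb 0 0)
  map_add' a b := map_add (SB.emb 0 0) a b
  map_mul' a b := by rw [SB.emb_mul, if_pos rfl]
  map_star' a := (SB.emb_star 0 0 a).symm

variable (SB : Stabilization A W)

theorem hom_apply (a : A) : SB.hom a = SB.emb 0 0 a := rfl

theorem continuous_emb (i j : ℕ) : Continuous (SB.emb i j) :=
  (AddMonoidHomClass.isometry_of_norm (SB.emb i j) (SB.norm_emb i j)).continuous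

theorem isometry_hom : Isometry SB.hom :=
  AddMonoidHomClass.isometry_of_norm SB.hom (SB.norm_emb 0 0)

theorem emb_mul_emb (i j k : ℕ) (a b : A) : SB.emb i j a * SB.emb j k b = SB.emb i k (a * b) := by
  rw [SB.emb_mul, if_pos rfl]

theorem emb_mul_emb_of_ne (i l : ℕ) {j k : ℕ} (h : j ≠ k) (a b : A) :
    SB.emb i j a * SB.emb k l b = 0 := by
  rw [SB.emb_mul, if_neg h]

theorem hom_cfcₙ {f : ℝ → ℝ} (hf : Continuous f) (hf0 : f 0 = 0) {a : A} (ha : IsSelfAdjoint a) :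
    SB.hom (cfcₙ f a) = cfcₙ f (SB.hom a) :=
  NonUnitalStarAlgHom.map_cfcₙ SB.hom f a hf.continuousOn hf0 SB.isometry_hom.continuous ha
    (ha.map SB.hom)

theorem hom_fEps {ε : ℝ} (hε : 0 < ε) {a : A} (ha : IsSelfAdjoint a) :
    SB.hom (fEps ε a) = fEps ε (SB.hom a) :=
  SB.hom_cfcₙ (continuous_cutoff ε) (cutoff_eventuallyEq_zero hε).eq_of_nhds ha

theorem eq_univ_of_isClosed {K : Set W} (hK : IsClosed K) (hzero : 0 ∈ K)
    (hadd : ∀ x ∈ K, ∀ y ∈ K, x + y ∈ K) (hemb : ∀ i j a, SB.emb i j a ∈ K) : K = Set.univ := by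
  refine Set.eq_univ_of_forall fun w => closure_minimal (fun w hw => ?_) hK (SB.dense_span w)
  induction hw using Submodule.closure_induction with
  | zero => exact hzero
  | add x y _ _ hx hy => exact hadd x hx y hy
  | smul_mem r x hx =>
    obtain ⟨i, j, a, rfl⟩ := hx
    rw [← map_smul]
    exact hemb i j (r • a)

theorem norm_sub_le_of_hom_mul {b a a' : A} {w w' : W}
    (h : ∀ c, SB.hom c * w * SB.hom b = SB.hom (c * a))
    (h' : ∀ c, SB.hom c * w' * SB.hom b = SB.hom (c * a')) : ‖a - a'‖ ≤ ‖w - w'‖ * ‖b‖ := by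
  set d := a - a'
  have hd : SB.hom (star d * d) = SB.hom (star d) * (w - w') * SB.hom b := by
    rw [mul_sub (SB.hom _), sub_mul, h, h', ← map_sub, ← mul_sub]
  have hsq : ‖d‖ * ‖d‖ ≤ ‖d‖ * (‖w - w'‖ * ‖b‖) :=
    calc ‖d‖ * ‖d‖ = ‖SB.hom (star d * d)‖ := by
          rw [SB.isometry_hom.norm_map_of_map_zero (map_zero _), CStarRing.norm_star_mul_self]
      _ ≤ ‖SB.hom (star d)‖ * ‖w - w'‖ * ‖SB.hom b‖ := by
          rw [hd]
          exact norm_mul₃_le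
      _ = ‖d‖ * (‖w - w'‖ * ‖b‖) := by
          rw [SB.isometry_hom.norm_map_of_map_zero (map_zero _),
            SB.isometry_hom.norm_map_of_map_zero (map_zero _), norm_star, mul_assoc]
  rcases (norm_nonneg d).eq_or_lt with h0 | h0
  · rw [← h0]
    positivity
  · exact le_of_mul_le_mul_left hsq h0

/- The element `a` is the compression `(1 ⊗ e₁₁) w b` of `w b` to the corner. -/
theorem exists_hom_mul_mul_hom (w : W) (b : A) :
    ∃ a, ∀ c, SB.hom c * w * SB.hom b = SB.hom (c * a) := by
  suffices {w | ∃ a, ∀ c, SB.hom c * w * SB.hom b = SB.hom (c * a)} = Set.univ from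
    this.ge (Set.mem_univ w)
  refine SB.eq_univ_of_isClosed ?_ ⟨0, by simp⟩ ?_ fun i j a => ?_
  · refine IsSeqClosed.isClosed fun w w₀ hw hlim => ?_
    choose a ha using hw
    have hcauchy : CauchySeq a := by
      refine cauchySeq_iff_tendsto_dist_atTop_0.2 (squeeze_zero (fun _ => dist_nonneg)
        (fun n => ?_) (by simpa only [zero_mul] using
          (cauchySeq_iff_tendsto_dist_atTop_0.1 hlim.cauchySeq).mul_const ‖b‖))
      rw [dist_eq_norm, dist_eq_norm]
      exact SB.norm_sub_le_of_hom_mul (ha n.1) (ha n.2)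
    obtain ⟨a₀, ha₀⟩ := cauchySeq_tendsto_of_complete hcauchy
    refine ⟨a₀, fun c => tendsto_nhds_unique ((hlim.const_mul _).mul_const _) ?_⟩
    simpa only [ha, Function.comp_def] using
      (SB.isometry_hom.continuous.tendsto _).comp (ha₀.const_mul c)
  · rintro x ⟨a, ha⟩ y ⟨a', ha'⟩
    exact ⟨a + a', fun c => by rw [mul_add, add_mul, ha, ha', mul_add, map_add]⟩
  · by_cases h : i = 0 ∧ j = 0
    · obtain ⟨rfl, rfl⟩ := h
      exact ⟨a * b, fun c => by rw [← hom_apply, map_mul, map_mul, mul_assoc]⟩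
    · refine ⟨0, fun c => ?_⟩
      rw [mul_zero, map_zero, hom_apply, hom_apply]
      by_cases hi : i = 0
      · rw [mul_assoc, SB.emb_mul_emb_of_ne _ _ fun hj => h ⟨hi, hj⟩, mul_zero]
      · rw [SB.emb_mul_emb_of_ne _ _ (Ne.symm hi), zero_mul]

theorem exists_mul_hom_mul_hom (w : W) (b : A) :
    ∃ a, ∀ c, SB.hom b * w * SB.hom c = SB.hom (a * c) := by
  obtain ⟨a, ha⟩ := SB.exists_hom_mul_mul_hom (star w) (star b)
  refine ⟨star a, fun c => star_injective ?_⟩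
  simpa only [← map_star, star_mul, star_star, mul_assoc] using ha (star c)

theorem hom_mul_mul_hom_mem_range (s t : A) (w : W) :
    SB.hom s * w * SB.hom t ∈ Set.range SB.hom := by
  obtain ⟨a, ha⟩ := SB.exists_hom_mul_mul_hom w t
  exact ⟨s * a, (ha s).symm⟩

theorem exists_mem_hom_mul_mul_hom {J : Set A} (hJ : IsIdealIn A Set.univ J) {w : W}
    (hw : w ∈ idealSpan {w | ∃ b, ∃ j ∈ J, ∃ b', w = SB.hom (b * j * b')}) :
    ∃ j ∈ J, ∀ c c', SB.hom c * w * SB.hom c' = SB.hom (c * j * c') := by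
  induction hw using AddSubgroup.closure_induction with
  | mem w hw =>
    obtain ⟨u, _, ⟨b, j, hj, b', rfl⟩, v, rfl⟩ := hw
    obtain ⟨a, ha⟩ := SB.exists_hom_mul_mul_hom u b
    obtain ⟨a', ha'⟩ := SB.exists_mul_hom_mul_hom v b'
    refine ⟨a * j * a', hJ.mul_mem_right (hJ.mul_mem_left hj a) a', fun c c' => ?_⟩
    calc SB.hom c * (u * SB.hom (b * j * b') * v) * SB.hom c'
        = SB.hom c * u * SB.hom b * SB.hom j * (SB.hom b' * v * SB.hom c') := by
          simp only [map_mul, mul_assoc]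
      _ = SB.hom (c * (a * j * a') * c') := by rw [ha, ha']; simp only [map_mul, mul_assoc]
  | zero => exact ⟨0, hJ.2.1, by simp⟩
  | add x y _ _ hx hy =>
    obtain ⟨j, hj, h⟩ := hx
    obtain ⟨j', hj', h'⟩ := hy
    exact ⟨j + j', hJ.add_mem hj hj', fun c c' => by
      simp only [mul_add, add_mul, h, h', map_add]⟩
  | neg x _ hx =>
    obtain ⟨j, hj, h⟩ := hx
    exact ⟨-j, hJ.2.2.2.1 j hj, fun c c' => by simp only [mul_neg, neg_mul, h, map_neg]⟩

end Corner

section Pedersen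

variable {A W : Type*} [NonUnitalCStarAlgebra A] [PartialOrder A] [StarOrderedRing A]
  [NonUnitalCStarAlgebra W]

variable (SB : Stabilization A W)

theorem dense_of_hom_mem_closure {J : Set W} (hJ : IsIdealIn W Set.univ J)
    (h : ∀ a, SB.hom a ∈ closure J) : Dense J := by
  have hcol : ∀ i a, SB.emb i 0 a ∈ closure J := fun i a =>
    closure_minimal (by
        rintro _ ⟨b, rfl⟩
        simpa only [Set.mem_preimage, hom_apply, emb_mul_emb] using
          hJ.closure.mul_mem_left (h a) (SB.emb i 0 b))
      (isClosed_closure.preimage (SB.continuous_emb i 0)) (mem_closure_range_mul_left a)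
  have hemb : ∀ i j a, SB.emb i j a ∈ closure J := fun i j a =>
    closure_minimal (by
        rintro _ ⟨c, rfl⟩
        simpa only [Set.mem_preimage, emb_mul_emb] using
          hJ.closure.mul_mem_right (hcol i a) (SB.emb 0 j c))
      (isClosed_closure.preimage (SB.continuous_emb i j)) (mem_closure_range_mul a)
  exact dense_iff_closure_eq.2 <| SB.eq_univ_of_isClosed isClosed_closure hJ.closure.2.1
    hJ.closure.2.2.1 hemb

theorem dense_hom_preimage {J : Set W} (hJ : IsIdealIn W Set.univ J) (hd : Dense J) :
    Dense (SB.hom ⁻¹' J) := fun a => by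
  refine mem_of_forall_mul_mul_mem isClosed_closure fun b c => ?_
  rw [SB.isometry_hom.isEmbedding.isInducing.closure_eq_preimage_closure_image, Set.mem_preimage,
    map_mul, map_mul]
  refine map_mem_closure (f := fun w => SB.hom b * w * SB.hom c) (by fun_prop) (hd (SB.hom a))
    fun w hw => ?_
  obtain ⟨d, hd⟩ := SB.hom_mul_mul_hom_mem_range b c w
  exact ⟨d, by simpa only [Set.mem_preimage, hd] using
    hJ.mul_mem_right (hJ.mul_mem_left hw (SB.hom b)) (SB.hom c), hd⟩

theorem hom_mem_pedersen {a : A} (ha : a ∈ pedersen A) : SB.hom a ∈ pedersen W :=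
  mem_pedersen_iff.2 fun _ hJ hd =>
    mem_pedersen_iff.1 ha _ (hJ.preimage SB.hom) (SB.dense_hom_preimage hJ hd)

variable [PartialOrder W] [StarOrderedRing W]

theorem dense_idealSpan_hom (hA : IsSimpleCStar A) {c : A} (hc : c ≠ 0) :
    Dense (idealSpan {SB.hom c}) := by
  have hideal := isIdealIn_idealSpan {SB.hom c}
  have huniv : SB.hom ⁻¹' closure (idealSpan {SB.hom c}) = Set.univ :=
    hA.eq_univ_of_isIdealIn (hideal.closure.preimage SB.hom)
      (isClosed_closure.preimage SB.isometry_hom.continuous)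
      (subset_closure_idealSpan _ (Set.mem_singleton (SB.hom c))) hc
  exact SB.dense_of_hom_mem_closure hideal fun a => huniv.ge (Set.mem_univ a)

theorem mem_pedersen_of_hom_mem {a : A} (ha : SB.hom a ∈ pedersen W) : a ∈ pedersen A := by
  refine mem_pedersen_iff.2 fun J hJ hd => ?_
  set S : Set W := {w | ∃ b, ∃ j ∈ J, ∃ b', w = SB.hom (b * j * b')}
  have hdense : Dense (idealSpan S) := by
    refine SB.dense_of_hom_mem_closure (isIdealIn_idealSpan S) fun x => ?_
    have hcl := (isClosed_closure (s := idealSpan S)).preimage SB.isometry_hom.continuous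
    refine mem_of_forall_mul_mul_mem hcl fun b c => ?_
    refine closure_minimal (fun j hj => ?_)
      (hcl.preimage (f := fun j => b * j * c) (by fun_prop)) (hd x)
    exact subset_closure_idealSpan S ⟨b, j, hj, c, rfl⟩
  obtain ⟨j, hj, h⟩ := SB.exists_mem_hom_mul_mul_hom hJ
    (mem_pedersen_iff.1 ha _ (isIdealIn_idealSpan S) hdense)
  have hsub : ∀ c c', c * (a - j) * c' = 0 := fun c c' => by
    apply SB.isometry_hom.injective
    rw [mul_sub, sub_mul, map_sub, ← h, map_mul, map_mul, sub_self, map_zero]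
  rwa [sub_eq_zero.1 (mem_of_forall_mul_mul_mem isClosed_singleton hsub : a - j = 0)]

end Pedersen

end Stabilization

section Scaling

variable {B : Type*} [NonUnitalCStarAlgebra B] [PartialOrder B]

namespace QuasiTrace

variable (τ : QuasiTrace B)

/-- The norm of the restriction of `τ` to `Her(c)`. -/
def herNorm (c : B) : ℝ≥0∞ :=
  ⨆ a : {a : B // a ∈ her c ∧ 0 ≤ a ∧ ‖a‖ ≤ 1}, τ.toFun a

/-- The multiple `r • τ` of a quasitrace. -/
def scale (r : NNReal) : QuasiTrace B where
  toFun a := r * τ.toFun a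
  zero_of_not_nonneg a ha := by rw [τ.zero_of_not_nonneg a ha, mul_zero]
  map_zero := by rw [τ.map_zero, mul_zero]
  map_smul s a hs ha := by rw [τ.map_smul s a hs ha, mul_left_comm]
  map_add_of_commute a b ha hb hab := by rw [τ.map_add_of_commute a b ha hb hab, mul_add]
  map_star_mul_self x := by rw [τ.map_star_mul_self]
  lowerSemicontinuousOn := (ENNReal.continuous_const_mul ENNReal.coe_ne_top)
    |>.comp_lowerSemicontinuousOn τ.lowerSemicontinuousOn fun _ _ h => mul_le_mul_right h r
  finite_on_pedersen a ha h0 :=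
    ENNReal.mul_lt_top ENNReal.coe_lt_top (τ.finite_on_pedersen a ha h0)
  exists_matrix_extension := by
    obtain ⟨σ, h1, h2, h3, h4, h5⟩ := τ.exists_matrix_extension
    refine ⟨fun x => r * σ x, fun a => congrArg (r * · : ℝ≥0∞ → ℝ≥0∞) (h1 a), ?_,
      fun s x hs hx => ?_, fun x y hx hy hxy => ?_, fun x => ?_⟩
    · simp only [h2, mul_zero]
    · simp only [h3 s x hs hx, mul_left_comm]
    · simp only [h4 x y hx hy hxy, mul_add]
    · simp only [h5 x]

theorem dTau_scale (r : NNReal) (a : B) : dTau (τ.scale r) a = r * dTau τ a :=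
  (ENNReal.mul_iSup ..).symm

theorem herNorm_scale (r : NNReal) (c : B) : (τ.scale r).herNorm c = r * τ.herNorm c :=
  (ENNReal.mul_iSup ..).symm

end QuasiTrace

end Scaling

section QuasiTraces

variable {B : Type*} [NonUnitalCStarAlgebra B] [PartialOrder B] [StarOrderedRing B]

theorem fEps_mul_self {e : B} (he : IsSelfAdjoint e) {ε : ℝ} (hε : 0 < ε) :
    fEps ε (e * e) = e * cfcₙ (cutoffDiv ε) (e * e) * e := by
  have hcomm : Commute e (cfcₙ (cutoffDiv ε) (e * e)) :=
    (((Commute.refl e).mul_left (Commute.refl e)).cfcₙ_real _).symm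
  rw [← cutoffDiv_mul_eq_fEps he.mul_self_nonneg hε, ← mul_assoc, hcomm.eq]

theorem sqrt_mem_closure_range_mul {a : B} (ha : 0 ≤ a) :
    CFC.sqrt a ∈ closure (Set.range (a * ·)) := by
  set s := CFC.sqrt a
  have hs : IsSelfAdjoint s := .of_nonneg (CFC.sqrt_nonneg a)
  have hss : s * s = a := CFC.sqrt_mul_sqrt_self a ha
  refine mem_closure_of_tendsto (tendsto_mul_fEps s) ?_
  filter_upwards [self_mem_nhdsWithin] with ε hε
  refine ⟨cfcₙ (cutoffDiv ε) (s * s) * s, ?_⟩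
  rw [hs.star_eq, fEps_mul_self hs hε]
  simp only [← hss, mul_assoc]

theorem sqrt_mem_closure_range_mul_of_mem_her {a b : B} (ha : 0 ≤ a) (hab : a ∈ her b) :
    CFC.sqrt a ∈ closure (Set.range (b * ·)) := by
  have hmul (t : B) : a * t ∈ closure (Set.range (b * ·)) := by
    refine map_mem_closure (f := (· * t)) (by fun_prop) hab ?_
    rintro _ ⟨y, rfl⟩
    exact ⟨y * b * t, by simp only [mul_assoc]⟩
  refine closure_minimal ?_ isClosed_closure (sqrt_mem_closure_range_mul ha)
  rintro _ ⟨t, rfl⟩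
  exact hmul t

namespace QuasiTrace

variable (τ : QuasiTrace B)

theorem toFun_le_of_commute {a b : B} (ha : 0 ≤ a) (hab : a ≤ b) (h : Commute a b) :
    τ.toFun a ≤ τ.toFun b :=
  calc τ.toFun a ≤ τ.toFun a + τ.toFun (b - a) := le_self_add
    _ = τ.toFun (a + (b - a)) := (τ.map_add_of_commute a (b - a) ha (sub_nonneg.2 hab)
        ((Commute.sub_right h (Commute.refl a)).eq)).symm
    _ = τ.toFun b := by rw [add_sub_cancel]

theorem toFun_sum_of_mul_eq_zero {ι : Type*} (s : Finset ι) {f : ι → B} (hf : ∀ i, 0 ≤ f i)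
    (h : ∀ i j, i ≠ j → f i * f j = 0) :
    τ.toFun (∑ i ∈ s, f i) = ∑ i ∈ s, τ.toFun (f i) := by
  classical
  induction s using Finset.induction with
  | empty => exact τ.map_zero
  | insert i s hi ih =>
    have hne : ∀ j ∈ s, i ≠ j := fun j hj hij => hi (hij ▸ hj)
    rw [Finset.sum_insert hi, Finset.sum_insert hi, ← ih]
    refine τ.map_add_of_commute _ _ (hf i) (Finset.sum_nonneg fun j _ => hf j) ?_
    rw [Finset.mul_sum, Finset.sum_mul, Finset.sum_eq_zero fun j hj => h i j (hne j hj),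
      Finset.sum_eq_zero fun j hj => h j i (hne j hj).symm]

theorem toFun_cfcₙ_le {f g : ℝ → ℝ} {a : B} (ha : 0 ≤ a) (hf : Continuous f) (hf0 : f 0 = 0)
    (hg : Continuous g) (hg0 : g 0 = 0) (h0 : ∀ t, 0 ≤ f t) (h : ∀ t, 0 ≤ t → f t ≤ g t) :
    τ.toFun (cfcₙ f a) ≤ τ.toFun (cfcₙ g a) :=
  τ.toFun_le_of_commute (cfcₙ_nonneg fun t _ => h0 t)
    (cfcₙ_mono (fun t ht => h t (quasispectrum_nonneg_of_nonneg a ha t ht))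
      hf.continuousOn hg.continuousOn hf0 hg0)
    (cfcₙ_commute_cfcₙ f g a)

theorem toFun_cfcₙ_le_dTau {f : ℝ → ℝ} {a : B} (ha : 0 ≤ a) (hf : Continuous f)
    (hf0 : f =ᶠ[𝓝 0] 0) (h0 : ∀ t, 0 ≤ f t) (h1 : ∀ t, f t ≤ 1) :
    τ.toFun (cfcₙ f a) ≤ dTau τ a := by
  obtain ⟨ε, hε, hz⟩ := Metric.eventually_nhds_iff.1 hf0
  obtain ⟨n, hn⟩ := exists_nat_one_div_lt hε
  have hn0 : (0 : ℝ) < 1 / (n + 1) := by positivity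
  refine le_iSup_of_le n (τ.toFun_cfcₙ_le ha hf hf0.eq_of_nhds (continuous_cutoff _)
    (cutoff_eventuallyEq_zero hn0).eq_of_nhds h0 fun t ht => ?_)
  rcases lt_or_ge t ε with htε | htε
  · rw [hz (by rwa [Real.dist_0_eq_abs, abs_of_nonneg ht])]
    exact cutoff_nonneg _ t
  · rw [cutoff_eq_one hn0 (hn.le.trans htε)]
    exact h1 t

theorem toFun_fEps_mul_self_le {a : B} (ha : 0 ≤ a) {ε : ℝ} (hε : 0 < ε) :
    τ.toFun (fEps ε a * fEps ε a) ≤ τ.toFun (fEps ε a) := by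
  have h0 : cutoff ε 0 = 0 := (cutoff_eventuallyEq_zero hε).eq_of_nhds
  have hcont := continuous_cutoff ε
  rw [fEps, cfcₙ_mul_of_mul_eq a hcont h0 hcont h0 fun _ => rfl]
  refine τ.toFun_cfcₙ_le ha (hcont.mul hcont) (by rw [h0, mul_zero]) hcont h0
    (fun t => mul_self_nonneg _) fun t _ => ?_
  exact mul_le_of_le_one_left (cutoff_nonneg ε t) (cutoff_le_one ε t)

theorem toFun_fEps_le_dTau {a : B} (ha : 0 ≤ a) {ε : ℝ} (hε : 0 < ε) :
    τ.toFun (fEps ε a) ≤ dTau τ a :=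
  τ.toFun_cfcₙ_le_dTau ha (continuous_cutoff ε) (cutoff_eventuallyEq_zero hε)
    (cutoff_nonneg ε) (cutoff_le_one ε)

theorem toFun_fEps_lt_top {a : B} (ha : 0 ≤ a) {ε : ℝ} (hε : 0 < ε) : τ.toFun (fEps ε a) < ∞ :=
  τ.finite_on_pedersen _ (fEps_mem_pedersen ha hε) (cfcₙ_nonneg fun t _ => cutoff_nonneg ε t)

theorem toFun_le_of_mul_eq {E y : B} (hE : IsSelfAdjoint E) (hy : 0 ≤ y) (h : E * y = y) :
    τ.toFun y ≤ ENNReal.ofReal ‖y‖ * τ.toFun (E * E) := by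
  rcases eq_or_ne y 0 with rfl | hne
  · rw [τ.map_zero]
    exact zero_le
  have h' : y * E = y := by simpa only [star_mul, hE.star_eq, hy.star_eq] using congrArg star h
  rw [← τ.map_smul _ _ (norm_pos_iff.2 hne) hE.mul_self_nonneg]
  refine τ.toFun_le_of_commute hy ?_ ?_
  · simpa only [hE.star_eq, h, h'] using
      CStarAlgebra.star_left_conjugate_le_norm_smul (a := E) (b := y) (.of_nonneg hy)
  · exact (Commute.mul_right (h'.trans h.symm) (h'.trans h.symm)).smul_right _

theorem toFun_mul_star_le {E w : B} (hE : IsSelfAdjoint E) (hw : w * E = w) (t : B) :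
    τ.toFun (w * t * star (w * t)) ≤ ENNReal.ofReal (‖w * t‖ ^ 2) * τ.toFun (E * E) := by
  set P := CFC.sqrt (star w * w)
  have hP : star P = P := (CFC.sqrt_nonneg _).star_eq
  have hPP : P * P = star w * w := CFC.sqrt_mul_sqrt_self _ (star_mul_self_nonneg w)
  have hPE : P * E = P := by
    refine sub_eq_zero.1 ((CStarRing.star_mul_self_eq_zero_iff _).1 ?_)
    have hPPE : P * P * E = P * P := by rw [hPP, mul_assoc, hw]
    calc star (P * E - P) * (P * E - P) = E * (P * P * E - P * P) - (P * P * E - P * P) := by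
          rw [star_sub, star_mul, hP, hE.star_eq]
          noncomm_ring
      _ = 0 := by rw [hPPE, sub_self, mul_zero, sub_zero]
  have hEP : E * P = P := by simpa only [star_mul, hE.star_eq, hP] using congrArg star hPE
  have hpolar : star (w * t) * (w * t) = star (P * t) * (P * t) := by
    calc star (w * t) * (w * t) = star t * (star w * w) * t := by rw [star_mul]; noncomm_ring
      _ = star (P * t) * (P * t) := by rw [← hPP, star_mul, hP]; noncomm_ring
  have hnorm : ‖P * t * star (P * t)‖ = ‖w * t‖ ^ 2 := by
    rw [CStarRing.norm_self_mul_star, ← CStarRing.norm_star_mul_self, ← hpolar,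
      CStarRing.norm_star_mul_self, sq]
  rw [← τ.map_star_mul_self, hpolar, τ.map_star_mul_self, ← hnorm]
  exact τ.toFun_le_of_mul_eq hE (mul_star_self_nonneg _) (by rw [← mul_assoc, ← mul_assoc, hEP])

theorem lowerSemicontinuous_mul_star :
    LowerSemicontinuous fun v : B => τ.toFun (v * star v) := fun v y hy => by
  have hlim : Tendsto (fun v : B => v * star v) (𝓝 v) (𝓝[{a | 0 ≤ a}] (v * star v)) :=
    tendsto_nhdsWithin_iff.2 ⟨(by fun_prop : Continuous fun v : B => v * star v).tendsto v,
      Eventually.of_forall mul_star_self_nonneg⟩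
  exact hlim.eventually (τ.lowerSemicontinuousOn _ (mul_star_self_nonneg v) y hy)

theorem isClosed_setOf_mul_star_le {C : ℝ≥0∞} (hC : C ≠ ∞) :
    IsClosed {v : B | τ.toFun (v * star v) ≤ ENNReal.ofReal (‖v‖ ^ 2) * C} :=
  τ.lowerSemicontinuous_mul_star.isClosed_epigraph.preimage <|
    continuous_id.prodMk <| (ENNReal.continuous_mul_const hC).comp <|
      ENNReal.continuous_ofReal.comp (by fun_prop)

theorem dTau_cfcₙ_add_le {a : B} (ha : 0 ≤ a) {p : ℝ → ℝ} (hp : Continuous p) (hp0 : p 0 = 0)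
    {ε : ℝ} (hε : 0 < ε) (hpε : ∀ t, ε / 2 ≤ t → p t = 0) :
    dTau τ (cfcₙ p a) + τ.toFun (fEps ε a) ≤ dTau τ a := by
  rw [dTau, ENNReal.iSup_add]
  refine iSup_le fun n => ?_
  set q : ℝ → ℝ := fun t => cutoff (1 / (n + 1)) (p t)
  have hn0 : (0 : ℝ) < 1 / (n + 1) := by positivity
  have hq : Continuous q := (continuous_cutoff _).comp hp
  have hqz : q =ᶠ[𝓝 0] 0 := (hp.tendsto' 0 0 hp0).eventually (cutoff_eventuallyEq_zero hn0)
  have hεz := cutoff_eventuallyEq_zero hε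
  have hcomp : fEps (1 / (n + 1)) (cfcₙ p a) = cfcₙ q a :=
    (cfcₙ_comp' (cutoff (1 / (n + 1))) p a (continuous_cutoff _).continuousOn
      (cutoff_eventuallyEq_zero hn0).eq_of_nhds hp.continuousOn hp0).symm
  have hadd : τ.toFun (cfcₙ q a) + τ.toFun (fEps ε a) =
      τ.toFun (cfcₙ (fun t => q t + cutoff ε t) a) := by
    rw [cfcₙ_add q (cutoff ε) a hq.continuousOn hqz.eq_of_nhds (continuous_cutoff ε).continuousOn
      hεz.eq_of_nhds]
    exact (τ.map_add_of_commute _ _ (cfcₙ_nonneg fun t _ => cutoff_nonneg _ _)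
      (cfcₙ_nonneg fun t _ => cutoff_nonneg _ _) (cfcₙ_commute_cfcₙ _ _ a).eq).symm
  rw [hcomp, hadd]
  refine τ.toFun_cfcₙ_le_dTau ha (hq.add (continuous_cutoff ε)) ?_
    (fun t => add_nonneg (cutoff_nonneg _ _) (cutoff_nonneg _ _)) fun t => ?_
  · filter_upwards [hqz, hεz] with t h h'
    rw [h, h', Pi.zero_apply, add_zero]
  · rcases le_total t (ε / 2) with ht | ht
    · rw [cutoff_eq_zero hε ht, add_zero]
      exact cutoff_le_one _ _
    · have hqt : q t = 0 := by
        simpa only [q, hpε t ht, Pi.zero_apply] using (cutoff_eventuallyEq_zero hn0).eq_of_nhds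
      rw [hqt, zero_add]
      exact cutoff_le_one _ _

theorem dTau_mul_self_le_herNorm {e : B} (he : IsSelfAdjoint e) :
    dTau τ (e * e) ≤ τ.herNorm e := by
  refine iSup_le fun n => ?_
  have hmem : fEps (1 / (n + 1)) (e * e) ∈ her e :=
    subset_closure ⟨_, fEps_mul_self he (by positivity)⟩
  exact le_iSup (fun a : {a : B // a ∈ her e ∧ 0 ≤ a ∧ ‖a‖ ≤ 1} => τ.toFun a) ⟨_, hmem,
    cfcₙ_nonneg fun t _ => cutoff_nonneg _ t,
    norm_cfcₙ_le_one _ (cutoff_nonneg _) (cutoff_le_one _)⟩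

end QuasiTrace

end QuasiTraces

namespace Stabilization

section Diagonal

variable {A W : Type*} [NonUnitalCStarAlgebra A] [NonUnitalCStarAlgebra W]

variable (SB : Stabilization A W)

/-- The diagonal matrix `c ⊗ (e₁₁ + ⋯ + eₙₙ)`. -/
def diag (n : ℕ) (c : A) : W := ∑ i : Fin n, SB.emb i i c

theorem emb_mul_diag {n : ℕ} (k : ℕ) (j : Fin n) (a c : A) :
    SB.emb k j a * SB.diag n c = SB.emb k j (a * c) := by
  rw [diag, Finset.mul_sum, Finset.sum_eq_single j
    (fun i _ hij => SB.emb_mul_emb_of_ne _ _ (Fin.val_ne_of_ne hij.symm) _ _) (by simp),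
    emb_mul_emb]

theorem diag_mul_diag (n : ℕ) (a c : A) : SB.diag n a * SB.diag n c = SB.diag n (a * c) := by
  rw [diag, Finset.sum_mul]
  exact Finset.sum_congr rfl fun i _ => SB.emb_mul_diag i i a c

theorem isSelfAdjoint_diag (n : ℕ) {c : A} (hc : IsSelfAdjoint c) :
    IsSelfAdjoint (SB.diag n c) := by
  rw [IsSelfAdjoint, diag, star_sum]
  exact Finset.sum_congr rfl fun i _ => by rw [SB.emb_star, hc.star_eq]

end Diagonal

section TraceBounds

variable {A W : Type*} [NonUnitalCStarAlgebra A] [NonUnitalCStarAlgebra W] [PartialOrder W]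
  [StarOrderedRing W] (SB : Stabilization A W)

theorem toFun_diag_star_mul_self (τ : QuasiTrace W) (n : ℕ) (q : A) :
    τ.toFun (SB.diag n (star q * q)) = n * τ.toFun (SB.hom (star q * q)) := by
  have hemb (i : ℕ) : SB.emb i i (star q * q) = star (SB.emb 0 i q) * SB.emb 0 i q := by
    rw [SB.emb_star, emb_mul_emb]
  have hτ (i : ℕ) : τ.toFun (SB.emb i i (star q * q)) = τ.toFun (SB.hom (star q * q)) := by
    rw [hemb, τ.map_star_mul_self, SB.emb_star, emb_mul_emb, hom_apply, hemb, τ.map_star_mul_self,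
      SB.emb_star, emb_mul_emb]
  rw [diag, τ.toFun_sum_of_mul_eq_zero _ (fun i => hemb i ▸ star_mul_self_nonneg _)
    fun i j hij => SB.emb_mul_emb_of_ne _ _ (Fin.val_ne_of_ne hij) _ _]
  simp only [hτ, Finset.sum_const, Finset.card_univ, Fintype.card_fin, nsmul_eq_mul]

variable [PartialOrder A] [StarOrderedRing A]

theorem exists_mul_eq_of_mem_pedersen (hA : IsSimpleCStar A) {b : W} (hb : b ∈ pedersen W)
    {c d : A} (hc : c ≠ 0) (hcd : c * d = c) :
    ∃ (n : ℕ) (w z : W), w * z = b ∧ w * SB.diag n d = w := by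
  have hcc : c * star c ≠ 0 := (CStarRing.mul_star_self_eq_zero_iff c).not.2 hc
  obtain ⟨n, U, V, rfl⟩ := exists_eq_sum_of_mem_idealSpan
    (mem_pedersen_iff.1 hb _ (isIdealIn_idealSpan _) (SB.dense_idealSpan_hom hA hcc))
  refine ⟨n, ∑ i, U i * SB.emb 0 i c, ∑ i : Fin n, SB.emb i 0 (star c) * V i, ?_, ?_⟩
  · rw [Finset.sum_mul_sum]
    refine Finset.sum_congr rfl fun i _ => ?_
    rw [Finset.sum_eq_single i (fun j _ hij => ?_) (by simp), mul_assoc, ← mul_assoc (SB.emb _ _ _),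
      emb_mul_emb, ← hom_apply, mul_assoc]
    rw [mul_assoc, ← mul_assoc (SB.emb _ _ _),
      SB.emb_mul_emb_of_ne _ _ (Fin.val_ne_of_ne hij.symm), zero_mul, mul_zero]
  · rw [Finset.sum_mul]
    exact Finset.sum_congr rfl fun i _ => by rw [mul_assoc, emb_mul_diag, hcd]

theorem exists_toFun_mul_star_le (hA : IsSimpleCStar A) {b : W} (hb : b ∈ pedersen W) {u : A}
    (hu : u ≠ 0) : ∃ n : ℕ, ∃ ε > 0, ∀ τ : QuasiTrace W, ∀ v ∈ closure (Set.range (b * ·)),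
      τ.toFun (v * star v) ≤
        ENNReal.ofReal (‖v‖ ^ 2) * (n * τ.toFun (fEps ε (SB.hom (star u * u)))) := by
  set a := star u * u
  have ha : 0 ≤ a := star_mul_self_nonneg u
  have hhom : 0 ≤ SB.hom a := map_nonneg SB.hom ha
  have hpos : 0 < ‖a‖ := norm_pos_iff.2 ((CStarRing.star_mul_self_eq_zero_iff u).not.2 hu)
  set ε := ‖a‖ / 4
  have hε : 0 < ε := by positivity
  set d := fEps ε a
  have hd : IsSelfAdjoint d := star_cfcₙ_real _ _
  have hc : fEps (2 * ε) a ≠ 0 := fun h => by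
    have := norm_le_of_fEps_eq_zero ha (by positivity) h
    grind
  have hcd : fEps (2 * ε) a * d = fEps (2 * ε) a :=
    (cfcₙ_commute_cfcₙ _ _ a).eq.trans (fEps_mul_fEps a hε (by linarith))
  obtain ⟨n, w, z, rfl, hw⟩ := SB.exists_mul_eq_of_mem_pedersen hA hb hc hcd
  refine ⟨n, ε, hε, fun τ => closure_minimal ?_ (τ.isClosed_setOf_mul_star_le ?_)⟩
  · rintro _ ⟨t, rfl⟩
    have hdd : τ.toFun (SB.hom (d * d)) ≤ τ.toFun (fEps ε (SB.hom a)) := by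
      rw [map_mul, SB.hom_fEps hε (.of_nonneg ha)]
      exact τ.toFun_fEps_mul_self_le hhom hε
    have hdiag : τ.toFun (SB.diag n d * SB.diag n d) ≤ n * τ.toFun (fEps ε (SB.hom a)) := by
      rw [diag_mul_diag]
      nth_rw 1 [← hd.star_eq]
      rw [toFun_diag_star_mul_self, hd.star_eq]
      gcongr
    have hwz := τ.toFun_mul_star_le (SB.isSelfAdjoint_diag n hd) hw (z * t)
    rw [← mul_assoc] at hwz
    exact hwz.trans (by gcongr)
  · exact ENNReal.mul_ne_top (ENNReal.natCast_ne_top n) (τ.toFun_fEps_lt_top hhom hε).ne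

theorem exists_herNorm_le (hA : IsSimpleCStar A) {b : W} (hb : b ∈ pedersen W) {u : A}
    (hu : u ≠ 0) : ∃ n : ℕ, ∃ ε > 0, ∀ τ : QuasiTrace W,
      τ.herNorm b ≤ n * τ.toFun (fEps ε (SB.hom (star u * u))) := by
  obtain ⟨n, ε, hε, h⟩ := SB.exists_toFun_mul_star_le hA hb hu
  refine ⟨n, ε, hε, fun τ => iSup_le fun ⟨a, hab, ha, ha1⟩ => ?_⟩
  set s := CFC.sqrt a
  have hs : s * star s = a := by
    rw [(CFC.sqrt_nonneg a).star_eq, CFC.sqrt_mul_sqrt_self a ha]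
  have hnorm : ENNReal.ofReal (‖s‖ ^ 2) ≤ 1 := by
    rwa [ENNReal.ofReal_le_one, sq, ← CStarRing.norm_self_mul_star, hs]
  calc τ.toFun a = τ.toFun (s * star s) := by rw [hs]
    _ ≤ ENNReal.ofReal (‖s‖ ^ 2) * (n * τ.toFun (fEps ε (SB.hom (star u * u)))) :=
        h τ s (sqrt_mem_closure_range_mul_of_mem_her ha hab)
    _ ≤ n * τ.toFun (fEps ε (SB.hom (star u * u))) := mul_le_of_le_one_left zero_le hnorm

theorem dTau_hom_pos (hA : IsSimpleCStar A) {u : A} (hu : u ≠ 0) {τ : QuasiTrace W}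
    (hτ : ¬ τ.IsZero) : 0 < dTau τ (SB.hom (star u * u)) := by
  rw [pos_iff_ne_zero]
  refine fun h0 => hτ fun a => ?_
  by_cases ha : 0 ≤ a
  swap
  · exact τ.zero_of_not_nonneg a ha
  have hnonneg : 0 ≤ SB.hom (star u * u) := by
    rw [map_mul, map_star]
    exact star_mul_self_nonneg _
  have hzero : ∀ v ∈ pedersen W, τ.toFun (v * star v) ≤ ENNReal.ofReal (‖v‖ ^ 2) * 0 := by
    intro v hv
    obtain ⟨n, ε, hε, h⟩ := SB.exists_toFun_mul_star_le hA hv hu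
    have hfEps : τ.toFun (fEps ε (SB.hom (star u * u))) = 0 :=
      le_zero_iff.1 (h0 ▸ τ.toFun_fEps_le_dTau hnonneg hε)
    simpa only [hfEps, mul_zero] using h τ v (mem_closure_range_mul v)
  have hall := closure_minimal hzero (τ.isClosed_setOf_mul_star_le ENNReal.zero_ne_top)
    (dense_pedersen (CFC.sqrt a))
  simpa only [(CFC.sqrt_nonneg a).star_eq, CFC.sqrt_mul_sqrt_self a ha, mul_zero,
    nonpos_iff_eq_zero] using (show τ.toFun _ ≤ _ from hall)

theorem exists_scale_mem_QTSetHer (hA : IsSimpleCStar A) {e : A} (he : IsSelfAdjoint e)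
    (hne : e ≠ 0) (hep : e ∈ pedersen A) {τ : QuasiTrace W} (hτ : ¬ τ.IsZero) :
    ∃ r : NNReal, τ.scale r ∈ QTSetHer (SB.hom e) := by
  have hpos : τ.herNorm (SB.hom e) ≠ 0 := by
    have hd := SB.dTau_hom_pos hA hne hτ
    rw [he.star_eq, map_mul] at hd
    exact (hd.trans_le (τ.dTau_mul_self_le_herNorm (he.map SB.hom))).ne'
  have htop : τ.herNorm (SB.hom e) ≠ ∞ := by
    obtain ⟨n, ε, hε, h⟩ := SB.exists_herNorm_le hA (SB.hom_mem_pedersen hep) hne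
    refine ne_top_of_le_ne_top (ENNReal.mul_ne_top (ENNReal.natCast_ne_top n) ?_) (h τ)
    rw [map_mul, map_star]
    exact (τ.toFun_fEps_lt_top (star_mul_self_nonneg _) hε).ne
  refine ⟨(τ.herNorm (SB.hom e))⁻¹.toNNReal, (τ.herNorm_scale _ _).trans ?_⟩
  rw [ENNReal.coe_toNNReal (ENNReal.inv_ne_top.2 hpos), ENNReal.inv_mul_cancel hpos htop]

end TraceBounds

end Stabilization

section Comparison

/-- Nonnegative functions of `a` supported close enough to `0` are Cuntz below `b`. This is what
`ω(a) = 0` and strict comparison provide. The functions must vanish on `[δ, ∞)` but are arbitrary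
on the negative axis, so the notion is meant for `0 ≤ a`. -/
def SubequivNearZero {B : Type*} [NonUnitalCStarAlgebra B] (a b : B) : Prop :=
  ∃ δ > 0, ∀ p : ℝ → ℝ, Continuous p → (∀ t, 0 ≤ p t) → p 0 = 0 → (∀ t, δ ≤ t → p t = 0) →
    CuntzLE (cfcₙ p a) b

theorem exists_dTau_cfcₙ_lt_of_omegaOn_eq_zero {B : Type*} [NonUnitalCStarAlgebra B]
    [PartialOrder B] [StarOrderedRing B] {S : Set (QuasiTrace B)} {a : B} (ha : 0 ≤ a)
    (hω : omegaOn S a = 0) {c : ℝ≥0∞} (hc : 0 < c) :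
    ∃ δ > 0, ∀ p : ℝ → ℝ, Continuous p → p 0 = 0 → (∀ t, δ ≤ t → p t = 0) →
      ∀ τ ∈ S, dTau τ (cfcₙ p a) < c := by
  obtain ⟨n, hn⟩ := iInf_lt_iff.1 (hω.trans_lt hc)
  have hε : (0 : ℝ) < 1 / (n + 1) := by positivity
  refine ⟨1 / (n + 1) / 2, half_pos hε, fun p hp hp0 hpδ τ hτ => lt_of_le_of_lt ?_ hn⟩
  exact (ENNReal.le_sub_of_add_le_right (τ.toFun_fEps_lt_top ha hε).ne
    (τ.dTau_cfcₙ_add_le ha hp hp0 hε hpδ)).trans (le_iSup₂_of_le τ hτ le_rfl)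

theorem Stabilization.subequivNearZero (SB : Stabilization A W) (hA : IsSimpleCStar A)
    (hsc : StrictComparison W) {e : A} (he : 0 ≤ e) (hne : e ≠ 0) (hep : e ∈ pedersen A) {a : W}
    (ha : 0 ≤ a) (hω : omegaOn (closure (QTSetHer (SB.hom e))) a = 0) {u : A} (hu : u ≠ 0) :
    SubequivNearZero a (SB.hom (star u * u)) := by
  have huu : 0 ≤ SB.hom (star u * u) := map_nonneg SB.hom (star_mul_self_nonneg u)
  obtain ⟨n, ε, hε, hn⟩ := SB.exists_herNorm_le hA (SB.hom_mem_pedersen hep) hu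
  obtain ⟨δ, hδ, h⟩ := exists_dTau_cfcₙ_lt_of_omegaOn_eq_zero ha hω
    (ENNReal.inv_pos.2 (ENNReal.natCast_ne_top n))
  refine ⟨δ, hδ, fun p hp hp_nonneg hp0 hpδ => ?_⟩
  refine hsc _ _ (cfcₙ_nonneg fun t _ => hp_nonneg t) huu fun τ hτ => ?_
  obtain ⟨r, hr⟩ := SB.exists_scale_mem_QTSetHer hA (.of_nonneg he) hne hep hτ
  have hle : (n : ℝ≥0∞)⁻¹ ≤ dTau (τ.scale r) (SB.hom (star u * u)) := by
    have h1 : 1 ≤ n * dTau (τ.scale r) (SB.hom (star u * u)) := calc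
      1 = (τ.scale r).herNorm (SB.hom e) := hr.symm
      _ ≤ _ := (hn _).trans (by gcongr; exact QuasiTrace.toFun_fEps_le_dTau _ huu hε)
    refine (ENNReal.inv_le_iff_le_mul (fun _ hn0 => ?_) (by simp)).2 h1
    simp [hn0] at h1
  have hlt := (h p hp hp0 hpδ _ (subset_closure hr)).trans_le hle
  rw [QuasiTrace.dTau_scale, QuasiTrace.dTau_scale] at hlt
  exact lt_of_mul_lt_mul_left' hlt

end Comparison

section OrthogonalSequences

section OrthogonalBumps

variable {B : Type*} [NonUnitalCStarAlgebra B]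

theorem cfcₙ_bump_ne_zero {a : B} (ha : IsSelfAdjoint a) {t : ℝ} (ht : 0 < t)
    (hta : t ∈ quasispectrum ℝ a) : cfcₙ (bump t (4 * t)) a ≠ 0 := fun h => by
  have := norm_apply_le_norm_cfcₙ (bump t (4 * t)) a hta (continuous_bump _ _).continuousOn
    (bump_zero ht (by linarith)) ha
  rw [h, bump_eq_one ht (by linarith) le_rfl (by linarith)] at this
  norm_num at this

theorem cfcₙ_bump_mul_bump (a : B) {r s t T : ℝ} (hr : 0 < r) (hrs : r ≤ s / 2) (hst : s ≤ t)
    (htT : 2 * t ≤ T) : cfcₙ (bump r T) a * cfcₙ (bump s t) a = cfcₙ (bump s t) a :=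
  cfcₙ_mul_of_mul_eq a (continuous_bump _ _) (bump_zero hr (by linarith)) (continuous_bump _ _)
    (bump_zero (by linarith) hst) (bump_mul_bump hr hrs hst htT)

theorem cfcₙ_bump_mul_bump_eq_zero (a : B) {s t s' t' : ℝ} (hs : 0 < s) (hst : s ≤ t)
    (hs' : 0 < s') (hst' : s' ≤ t') (h : t' ≤ s / 2) :
    cfcₙ (bump s t) a * cfcₙ (bump s' t') a = 0 := by
  rw [cfcₙ_mul_of_mul_eq a (continuous_bump _ _) (bump_zero hs hst) (continuous_bump _ _)
    (bump_zero hs' hst') (bump_mul_bump_eq_zero hs hst hs' hst' h), cfcₙ_const_zero]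

theorem SubequivNearZero.exists_factorization {a u : B}
    (h : SubequivNearZero a (star u * u)) :
    ∃ δ > 0, ∀ s t, 0 < s → s ≤ t → t ≤ δ → ∃ r q : B, ‖u * r‖ ≤ 2 ∧ ‖q * star u‖ ≤ 4 ∧
      ∀ c, cfcₙ (bump s t) a * c = c → q * star u * (u * r) * c = c := by
  obtain ⟨δ, hδ, h⟩ := h
  refine ⟨δ, hδ, fun s t hs hst htδ => ?_⟩
  exact (h _ (continuous_bump s t) (bump_nonneg hs hst) (bump_zero hs hst)
    fun x hx => bump_eq_zero_of_ge hs hst (htδ.trans hx)).exists_factorization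
    (norm_cfcₙ_le_one a (bump_nonneg hs hst) (bump_le_one _ _))

theorem SubequivNearZero.exists_orthogonal_pair {a e : B} (ha : IsSelfAdjoint a)
    (hacc : ∀ δ > 0, ∃ t ∈ quasispectrum ℝ a, 0 < t ∧ t < δ)
    (h : SubequivNearZero a (star e * e)) :
    ∃ z₁ z₂ : B, e * z₁ * star e ≠ 0 ∧ e * z₂ * star e ≠ 0 ∧
      e * z₁ * star e * (e * z₂ * star e) = 0 := by
  obtain ⟨δ, hδ, hfac⟩ := h.exists_factorization
  obtain ⟨t₁, ht₁a, ht₁, ht₁δ⟩ := hacc (δ / 8) (by positivity)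
  obtain ⟨t₂, ht₂a, ht₂, ht₂₁⟩ := hacc (t₁ / 8) (by positivity)
  set b₁ := cfcₙ (bump t₁ (4 * t₁)) a
  set b₂ := cfcₙ (bump t₂ (4 * t₂)) a
  obtain ⟨r, s, -, -, hrs⟩ := hfac (t₂ / 2) (8 * t₁) (by positivity) (by linarith) (by linarith)
  have hb₁ : s * star e * (e * r) * b₁ = b₁ :=
    hrs b₁ (cfcₙ_bump_mul_bump a (by positivity) (by linarith) (by linarith) (by linarith))
  have hb₂ : s * star e * (e * r) * b₂ = b₂ :=
    hrs b₂ (cfcₙ_bump_mul_bump a (by positivity) (by linarith) (by linarith) (by linarith))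
  have hne {b : B} (hb : s * star e * (e * r) * b = b) (hsa : IsSelfAdjoint b) (hb0 : b ≠ 0) :
      e * (r * b * s) * star e ≠ 0 := fun h0 => by
    refine hb0 ((CStarRing.star_mul_self_eq_zero_iff b).1 ?_)
    calc star b * b = s * star e * (e * r) * b * (s * star e * (e * r) * b) := by
          rw [hb, hsa.star_eq]
      _ = s * star e * (e * (r * b * s) * star e) * (e * r * b) := by noncomm_ring
      _ = 0 := by rw [h0, mul_zero, zero_mul]
  refine ⟨r * b₁ * s, r * b₂ * s, hne hb₁ (star_cfcₙ_real _ a) (cfcₙ_bump_ne_zero ha ht₁ ht₁a),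
    hne hb₂ (star_cfcₙ_real _ a) (cfcₙ_bump_ne_zero ha ht₂ ht₂a), ?_⟩
  calc e * (r * b₁ * s) * star e * (e * (r * b₂ * s) * star e)
      = e * r * b₁ * (s * star e * (e * r) * b₂) * s * star e := by noncomm_ring
    _ = e * r * (b₁ * b₂) * s * star e := by rw [hb₂]; noncomm_ring
    _ = 0 := by
      rw [cfcₙ_bump_mul_bump_eq_zero a ht₁ (by linarith) ht₂ (by linarith) (by linarith), mul_zero,
        zero_mul, zero_mul]

end OrthogonalBumps

namespace Stabilization

variable {A W : Type*} [NonUnitalCStarAlgebra A] [NonUnitalCStarAlgebra W]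
  (SB : Stabilization A W) {a : W}

theorem exists_orthogonal_pair (ha : IsSelfAdjoint a)
    (hacc : ∀ δ > 0, ∃ t ∈ quasispectrum ℝ a, 0 < t ∧ t < δ) {e : A}
    (h : SubequivNearZero a (SB.hom (star e * e))) :
    ∃ u v : A, u ≠ 0 ∧ v ≠ 0 ∧ star u * v = 0 ∧
      SB.hom e ∣ SB.hom u ∧ SB.hom e ∣ SB.hom v := by
  rw [map_mul, map_star] at h
  obtain ⟨z₁, z₂, h₁, h₂, h₁₂⟩ := h.exists_orthogonal_pair ha hacc
  rw [← map_star] at h₁ h₂ h₁₂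
  obtain ⟨g₁, hg₁⟩ := SB.hom_mul_mul_hom_mem_range e (star e) z₁
  obtain ⟨g₂, hg₂⟩ := SB.hom_mul_mul_hom_mem_range e (star e) z₂
  rw [← hg₁, ← hg₂, ← map_mul, SB.isometry_hom.injective.eq_iff' (map_zero _)] at h₁₂
  refine ⟨star g₁, g₂, star_ne_zero.2 fun h0 => h₁ ?_, fun h0 => h₂ ?_, ?_,
    ⟨star z₁ * star (SB.hom e), ?_⟩, ⟨z₂ * SB.hom (star e), ?_⟩⟩
  · rw [← hg₁, h0, map_zero]
  · rw [← hg₂, h0, map_zero]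
  · rwa [star_star]
  · simp only [map_star, hg₁, star_mul, star_star, mul_assoc]
  · rw [hg₂, mul_assoc]

theorem exists_orthogonal_seq (ha : IsSelfAdjoint a)
    (hacc : ∀ δ > 0, ∃ t ∈ quasispectrum ℝ a, 0 < t ∧ t < δ)
    (h : ∀ u : A, u ≠ 0 → SubequivNearZero a (SB.hom (star u * u))) {e : A} (he : e ≠ 0) :
    ∃ u : ℕ → A, (∀ k, u k ≠ 0) ∧ (∀ k, SB.hom e ∣ SB.hom (u k)) ∧
      Pairwise fun k l => star (u k) * u l = 0 := by
  choose! U V hU hV hUV hdU hdV using fun u hu => SB.exists_orthogonal_pair ha hacc (h u hu)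
  set v : ℕ → A := fun n => V^[n] e
  have hvs (n : ℕ) : v (n + 1) = V (v n) := Function.iterate_succ_apply' V n e
  have hv (n : ℕ) : v n ≠ 0 := by
    induction n with
    | zero => exact he
    | succ n ih => exact hvs n ▸ hV _ ih
  have hdvd (m d : ℕ) : SB.hom (v m) ∣ SB.hom (U (v (m + d))) := by
    induction d generalizing m with
    | zero => exact hdU _ (hv m)
    | succ d ih =>
      rw [← Nat.add_assoc, Nat.add_right_comm]
      exact (hvs m ▸ hdV _ (hv m)).trans (ih (m + 1))
  have hlt {k l : ℕ} (hkl : k < l) : star (U (v k)) * U (v l) = 0 := by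
    obtain ⟨d, rfl⟩ := Nat.exists_eq_add_of_le (Nat.succ_le_of_lt hkl)
    obtain ⟨w, hw⟩ := hdvd (k + 1) d
    apply SB.isometry_hom.injective
    rw [map_mul, hw, ← mul_assoc, ← map_mul, hvs, hUV _ (hv k), map_zero, zero_mul]
  refine ⟨fun n => U (v n), fun n => hU _ (hv n),
    fun n => n.zero_add ▸ hdvd 0 n, fun k l hkl => ?_⟩
  rcases hkl.lt_or_gt with h | h
  · exact hlt h
  · simpa only [star_mul, star_star, star_zero] using congrArg star (hlt h)

end Stabilization

end OrthogonalSequences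

section Assembly

theorem hasSum_mul_of_mul_eq_zero {B : Type*} [NonUnitalNonAssocSemiring B] [TopologicalSpace B]
    [IsTopologicalSemiring B] [T2Space B] {f g : ℕ → B} {a b : B} (hf : HasSum f a)
    (hg : HasSum g b) (h : Pairwise fun k l => f k * g l = 0) :
    HasSum (fun k => f k * g k) (a * b) := by
  have hfb (k : ℕ) : f k * b = f k * g k :=
    (hg.mul_left (f k)).unique (hasSum_single k fun l hl => h hl.symm)
  simpa only [hfb] using hf.mul_right b

theorem exists_antitone_seq_pos_le {δ : ℕ → ℝ} (hδ : ∀ k, 0 < δ k) :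
    ∃ t : ℕ → ℝ, (∀ k, 0 < t k) ∧ (∀ k, t k ≤ δ k) ∧ Antitone t ∧ ∀ k, t k ≤ (1 / 16) ^ k := by
  let t : ℕ → ℝ := fun k => Nat.rec (min 1 (δ 0)) (fun k s => min (s / 16) (δ (k + 1))) k
  have hts (k : ℕ) : t (k + 1) = min (t k / 16) (δ (k + 1)) := rfl
  have hpos (k : ℕ) : 0 < t k := by
    induction k with
    | zero => exact lt_min one_pos (hδ 0)
    | succ k ih => exact lt_min (by positivity) (hδ _)
  have hsucc (k : ℕ) : t (k + 1) ≤ t k / 16 := (hts k).trans_le (min_le_left _ _)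
  refine ⟨t, hpos, fun k => ?_, antitone_nat_of_succ_le fun k => ?_, fun k => ?_⟩
  · cases k with
    | zero => exact min_le_right _ _
    | succ k => exact min_le_right _ _
  · linarith [hsucc k, hpos k]
  · induction k with
    | zero => exact (min_le_left _ _).trans (pow_zero _).ge
    | succ k ih => linarith [hsucc k, pow_succ (1 / 16 : ℝ) k]

variable {B : Type*} [NonUnitalCStarAlgebra B]

theorem exists_hasSum_mul_of_orthogonal {u y z : ℕ → B} {C D : ℝ}
    (hu : Pairwise fun k l => star (u k) * u l = 0)
    (hy : ∀ k, ‖y k * star (u k)‖ ≤ C * (1 / 4) ^ k) (hz : ∀ k, ‖u k * z k‖ ≤ D) :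
    ∃ a b : B, HasSum (fun k => y k * star (u k) * (u k * z k)) (a * b) ∧
      ∀ g, (∀ k, g * u k = u k) → g * b = b := by
  set m : ℕ → B := fun k => (2 : ℝ) ^ k • (y k * star (u k))
  set m' : ℕ → B := fun k => (1 / 2 : ℝ) ^ k • (u k * z k)
  have hm : Summable m := by
    refine .of_norm_bounded (summable_geometric_two.mul_left C) fun k => ?_
    rw [norm_smul, norm_pow, Real.norm_ofNat]
    calc 2 ^ k * ‖y k * star (u k)‖ ≤ 2 ^ k * (C * (1 / 4) ^ k) := by gcongr; exact hy k
      _ = C * (1 / 2) ^ k := by rw [mul_left_comm, ← mul_pow]; norm_num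
  have hm' : Summable m' := by
    refine .of_norm_bounded (summable_geometric_two.mul_right D) fun k => ?_
    rw [norm_smul, norm_pow, Real.norm_of_nonneg one_half_pos.le]
    exact mul_le_mul_of_nonneg_left (hz k) (by positivity)
  have hterm (k : ℕ) : m k * m' k = y k * star (u k) * (u k * z k) := by
    rw [smul_mul_smul_comm, ← mul_pow, mul_one_div_cancel two_ne_zero, one_pow, one_smul]
  have horth {k l : ℕ} (hkl : k ≠ l) : m k * m' l = 0 := by
    rw [smul_mul_smul_comm, mul_assoc, ← mul_assoc (star _), hu hkl, zero_mul, mul_zero, smul_zero]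
  refine ⟨∑' k, m k, ∑' k, m' k, ?_, fun g hg => ?_⟩
  · simpa only [hterm] using hasSum_mul_of_mul_eq_zero hm.hasSum hm'.hasSum fun _ _ => horth
  · rw [← hm'.tsum_mul_left]
    exact tsum_congr fun k => by rw [mul_smul_comm, ← mul_assoc, hg]

variable [PartialOrder B] [StarOrderedRing B]

theorem mem_pedersen_of_gap (x : B) {δ : ℝ} (hδ : 0 < δ)
    (h : ∀ t ∈ quasispectrum ℝ (star x * x), 0 < t → δ ≤ t) : x ∈ pedersen B := by
  have hx : ‖x - x * fEps δ (star x * x)‖ ^ 2 ≤ 0 :=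
    norm_sub_mul_cfcₙ_sq_le x (continuous_cutoff δ) (cutoff_eventuallyEq_zero hδ).eq_of_nhds
      fun t ht => by
        have ht0 := quasispectrum_nonneg_of_nonneg _ (star_mul_self_nonneg x) t ht
        rcases ht0.eq_or_lt with h0 | h0
        · rw [← h0, zero_mul]
        · rw [cutoff_eq_one hδ (h t ht h0), sub_self, zero_pow two_ne_zero, mul_zero]
  rw [sq_nonpos_iff, norm_eq_zero, sub_eq_zero] at hx
  rw [hx]
  exact isIdealIn_pedersen.mul_mem_left (fEps_mem_pedersen (star_mul_self_nonneg x) hδ) x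

theorem norm_mul_cfcₙ_bump_sq_le (x : B) {s t : ℝ} (hs : 0 < s) (hst : s ≤ t) :
    ‖x * cfcₙ (bump s t) (star x * x)‖ ^ 2 ≤ t := by
  refine norm_mul_cfcₙ_sq_le x (continuous_bump s t) (bump_zero hs hst) fun r _ => ?_
  rcases le_total r t with hrt | hrt
  · calc r * bump s t r ^ 2 ≤ t * 1 ^ 2 := by
          gcongr
          exacts [hs.le.trans hst, bump_nonneg hs hst r, bump_le_one s t r]
      _ = t := by ring
  · rw [bump_eq_zero_of_ge hs hst hrt]
    linarith

theorem SubequivNearZero.exists_mul_bump_factorization {x u : B}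
    (h : SubequivNearZero (star x * x) (star u * u)) :
    ∃ δ > 0, ∀ s t, 0 < s → s ≤ t → t ≤ δ → ∃ y z, ‖y * star u‖ ^ 2 ≤ 32 * t ∧ ‖u * z‖ ≤ 2 ∧
      y * star u * (u * z) = x * cfcₙ (bump s t) (star x * x) := by
  obtain ⟨δ, hδ, h⟩ := h.exists_factorization
  refine ⟨δ / 2, by positivity, fun s t hs hst htδ => ?_⟩
  obtain ⟨r, q, hr, hq, hrq⟩ := h (s / 2) (2 * t) (by positivity) (by linarith) (by linarith)
  set a := star x * x
  set b := cfcₙ (bump s t) a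
  set p := cfcₙ (bump (s / 2) (2 * t)) a
  have hxp : ‖x * p‖ ^ 2 ≤ 2 * t := norm_mul_cfcₙ_bump_sq_le x (by positivity) (by linarith)
  have hb : ‖b‖ ≤ 1 := norm_cfcₙ_le_one a (bump_nonneg hs hst) (bump_le_one _ _)
  have hpb : p * b = b := cfcₙ_bump_mul_bump a (by positivity) le_rfl hst le_rfl
  refine ⟨x * p * q, r * b, ?_, ?_, ?_⟩
  · calc ‖x * p * q * star u‖ ^ 2 ≤ (‖x * p‖ * 4) ^ 2 := by
          rw [mul_assoc _ q]
          gcongr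
          exact norm_mul_le_of_le le_rfl hq
      _ = ‖x * p‖ ^ 2 * 16 := by ring
      _ ≤ 32 * t := by linarith
  · rw [← mul_assoc]
    exact (norm_mul_le_of_le hr hb).trans_eq (mul_one 2)
  · calc x * p * q * star u * (u * (r * b)) = x * p * (q * star u * (u * r) * b) := by
          noncomm_ring
      _ = x * b := by rw [hrq b hpb, mul_assoc, hpb]

theorem hasSum_mul_cfcₙ_bump (x : B) {t : ℕ → ℝ} (ht : ∀ k, 0 < t k)
    (hlim : Tendsto t atTop (𝓝 0))
    (hsum : Summable fun k => x * cfcₙ (bump (t (k + 1)) (t k)) (star x * x)) :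
    HasSum (fun k => x * cfcₙ (bump (t (k + 1)) (t k)) (star x * x))
      (x - x * fEps (t 0) (star x * x)) := by
  refine hsum.hasSum_iff_tendsto_nat.2 ?_
  have hterm (k : ℕ) : x * cfcₙ (bump (t (k + 1)) (t k)) (star x * x) =
      x * fEps (t (k + 1)) (star x * x) - x * fEps (t k) (star x * x) := by
    rw [← mul_sub]
    exact congrArg (x * ·) (cfcₙ_sub _ _ _ (continuous_cutoff _).continuousOn
      (cutoff_eventuallyEq_zero (ht _)).eq_of_nhds (continuous_cutoff _).continuousOn
      (cutoff_eventuallyEq_zero (ht _)).eq_of_nhds)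
  simp only [hterm, Finset.sum_range_sub fun k => x * fEps (t k) (star x * x)]
  exact ((tendsto_mul_fEps x).comp (tendsto_nhdsWithin_iff.2 ⟨hlim, .of_forall ht⟩)).sub_const _

theorem mem_pedersen_of_orthogonal_seq (x : B) {u : ℕ → B}
    (hu : Pairwise fun k l => star (u k) * u l = 0)
    (h : ∀ k, SubequivNearZero (star x * x) (star (u k) * u k)) {g : B} (hg : g ∈ pedersen B)
    (hgu : ∀ k, g * u k = u k) : x ∈ pedersen B := by
  choose δ hδ hfac using fun k => (h k).exists_mul_bump_factorization
  obtain ⟨t, ht, htδ, hanti, ht16⟩ := exists_antitone_seq_pos_le hδ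
  choose y z hy hz hyz using fun k => hfac k _ _ (ht (k + 1)) (hanti k.le_succ) (htδ k)
  have hy' (k : ℕ) : ‖y k * star (u k)‖ ≤ 6 * (1 / 4) ^ k := by
    refine (sq_le_sq₀ (norm_nonneg _) (by positivity)).1 ((hy k).trans ?_)
    calc 32 * t k ≤ 36 * (1 / 16) ^ k := by linarith [ht16 k, ht k]
      _ = (6 * (1 / 4) ^ k) ^ 2 := by rw [mul_pow, pow_right_comm]; norm_num
  obtain ⟨a, b, hab, hgb⟩ := exists_hasSum_mul_of_orthogonal hu hy' hz
  simp only [hyz] at hab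
  have hlim : Tendsto t atTop (𝓝 0) := squeeze_zero (fun k => (ht k).le) ht16
    (tendsto_pow_atTop_nhds_zero_of_lt_one (by norm_num) (by norm_num))
  have hx := hab.unique (hasSum_mul_cfcₙ_bump x ht hlim hab.summable)
  rw [← sub_add_cancel x (x * fEps (t 0) (star x * x)), ← hx, ← hgb g hgu]
  exact isIdealIn_pedersen.add_mem
    (isIdealIn_pedersen.mul_mem_left (isIdealIn_pedersen.mul_mem_right hg b) a)
    (isIdealIn_pedersen.mul_mem_left (fEps_mem_pedersen (star_mul_self_nonneg x) (ht 0)) x)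

end Assembly

theorem exists_pedersen_mul_eq_self (B : Type*) [NonUnitalCStarAlgebra B] [PartialOrder B]
    [StarOrderedRing B] [Nontrivial B] :
    ∃ g ∈ pedersen B, ∃ e ∈ pedersen B, 0 ≤ e ∧ e ≠ 0 ∧ g * e = e := by
  obtain ⟨z, hz⟩ := exists_ne (0 : B)
  set a := star z * z
  have ha : 0 ≤ a := star_mul_self_nonneg z
  have hnorm : 0 < ‖a‖ := norm_pos_iff.2 ((CStarRing.star_mul_self_eq_zero_iff z).not.2 hz)
  refine ⟨fEps (‖a‖ / 4) a, fEps_mem_pedersen ha (by positivity), fEps (‖a‖ / 2) a,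
    fEps_mem_pedersen ha (by positivity), cfcₙ_nonneg fun t _ => cutoff_nonneg _ t, fun h => ?_,
    fEps_mul_fEps a (by positivity) (by linarith)⟩
  linarith [norm_le_of_fEps_eq_zero ha (by positivity) h]

theorem Stabilization.mem_pedersen_of_subequivNearZero [Nontrivial A] (SB : Stabilization A W)
    (x : W) (h : ∀ u : A, u ≠ 0 → SubequivNearZero (star x * x) (SB.hom (star u * u))) :
    x ∈ pedersen W := by
  by_cases hacc : ∀ δ > 0, ∃ t ∈ quasispectrum ℝ (star x * x), 0 < t ∧ t < δ
  · obtain ⟨g, hg, e, -, -, hne, hge⟩ := exists_pedersen_mul_eq_self A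
    obtain ⟨u, hu, hdvd, horth⟩ := SB.exists_orthogonal_seq (.star_mul_self x) hacc h hne
    refine mem_pedersen_of_orthogonal_seq x (u := fun k => SB.hom (u k)) (fun k l hkl => ?_)
      (fun k => ?_) (SB.hom_mem_pedersen hg) fun k => ?_
    · simp only [← map_star, ← map_mul, horth hkl, map_zero]
    · simpa only [map_mul, map_star] using h _ (hu k)
    · obtain ⟨w, hw⟩ := hdvd k
      simp only [hw, ← mul_assoc, ← map_mul, hge]
  · push Not at hacc
    obtain ⟨δ, hδ, hgap⟩ := hacc
    exact mem_pedersen_of_gap x hδ hgap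

theorem mem_pedersen_of_finite_continuous_dimension_general
    (SB : Stabilization A W) (hsimple : IsSimpleCStar A) (hsc : StrictComparison W) (x : W)
    {e : A} (he : 0 ≤ e) (hne : e ≠ 0) (hep : e ∈ pedersen A)
    (hω : omegaOn (closure (QTSetHer (SB.emb 0 0 e))) (star x * x) = 0) :
    x ∈ pedersen W ∧ ∀ y : A, x = SB.emb 0 0 y → y ∈ pedersen A := by
  have : Nontrivial A := nontrivial_of_ne e 0 hne
  have hx : x ∈ pedersen W := SB.mem_pedersen_of_subequivNearZero x fun _ hu =>
    SB.subequivNearZero hsimple hsc he hne hep (star_mul_self_nonneg x) hω hu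
  exact ⟨hx, fun y hy => SB.mem_pedersen_of_hom_mem (hy ▸ hx)⟩

/-- **Corollary.** Let `A` be a σ-unital simple C*-algebra with `QT̃(A) ≠ {0}` and strict
comparison, and `x ∈ A ⊗ K` with `d_τ(x*x) < ∞` for all `τ ∈ QT̃(A)` and `ω(x*x) = 0`.
Then `x ∈ Ped(A ⊗ K)`; if moreover `x ∈ A`, then `x ∈ Ped(A)`. -/
theorem mem_pedersen_of_finite_continuous_dimension
    (SB : Stabilization A W)
    (hσ : SigmaUnital A) (hsimple : IsSimpleCStar A)
    (hqt : ∃ τ : QuasiTrace W, ¬ τ.IsZero)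
    (hsc : StrictComparison W)
    (x : W) (hfin : ∀ τ : QuasiTrace W, dTau τ (star x * x) < ∞)
    (hω : OmegaZero SB (star x * x)) :
    x ∈ pedersen W ∧ ∀ y : A, x = SB.emb 0 0 y → y ∈ pedersen A := by
  have : Nontrivial A := nontrivial_of_ne _ 0 hsimple.1.choose_spec
  obtain ⟨-, -, e, hep, he, hne, -⟩ := exists_pedersen_mul_eq_self A
  exact mem_pedersen_of_finite_continuous_dimension_general SB hsimple hsc x he hne hep
    (hω e he hne hep)

end Paper
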